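/- arXiv:1512.01186 — 2 statements merged into one kernel-verified Lean document; each statement's English description precedes it below -/
import Mathlib

section
/- Let s be a complex number with Re(s) > 1. Then ∫_{0 ↗ 1} (e^{iπu²}·u^{-s}/(e^{iπu} - e^{-iπu})) du = (2π)^{s/2}·e^{iπs/4 + iπ/8}·(1/Γ(s))·∫_{0 ↖ 1} (e^{-iπu²/2 + iπu/2}/(e^{-2πiu} - 1))·e^{-iπ(u-1/2)²/2}·(∫_0^∞ e^{-w²/2 - √(2π)·e^{iπ/4}·(u-1/2)·w}·w^{s-1} dw) du. (The factor e^{-iπ(u-1/2)²/2} times the inner integral divided by Γ(s) equals U(s-1/2, √(2π)e^{iπ/4}(u-1/2)), where U is the parabolic cylinder function.) -/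
open scoped Real
open MeasureTheory Set Complex

/-- Integral along the straight line `t ↦ c + e^{iθ} t`, `t ∈ ℝ`. -/
noncomputable def lineInt (c θ : ℝ) (f : ℂ → ℂ) : ℂ :=
  ∫ t : ℝ, f ((c : ℂ) + Complex.exp ((θ : ℂ) * Complex.I) * (t : ℂ)) *
    Complex.exp ((θ : ℂ) * Complex.I)

/-!
The idea is to insert two integral representations into the integrand on the left. For `u` on the
line `0 ↗ 1`, the kernel identity `1 / (e^{2πiu} - 1) = ∫_{0 ↖ 1} e^{-2πiuv} / (e^{-2πiv} - 1) dv`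
holds because moving the line from `c` to `c - 1` multiplies the integral by `e^{2πiu}`, while the
residue theorem at `v = 0` computes the change. The power `u^{-s}` is written as the Gamma integral
`Γ(s)⁻¹ (√(2π) e^{iπ/4})^s ∫_0^∞ e^{-√(2π) e^{iπ/4} u w} w^{s-1} dw`, which converges because
`e^{iπ/4} u` has positive real part. Fubini's theorem then makes the `u`-integral the innermost one;
it is Gaussian, and its value is the integrand on the right.
-/

open Filter Topology Bornology Asymptotics

/-! ### Residue theorem in a horizontal strip -/

lemma ofReal_add_mul_I_ne_zero (x : ℝ) {y : ℝ} (hy : y ≠ 0) : (x : ℂ) + y * I ≠ 0 := fun h ↦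
  hy (by simpa using congr_arg im h)

lemma integral_inv_ofReal_add_mul_I {a : ℝ} (ha : a ≠ 0) (R : ℝ) :
    ∫ x : ℝ in -R..R, ((x : ℂ) + a * I)⁻¹ = -2 * I * (Real.arctan (R / a) : ℂ) := by
  have hne (x : ℝ) : (x : ℂ) + a * I ≠ 0 := ofReal_add_mul_I_ne_zero x ha
  have hcont : Continuous fun x : ℝ ↦ ((x : ℂ) + a * I)⁻¹ := .inv₀ (by fun_prop) hne
  have hcont_neg : Continuous fun x : ℝ ↦ (((-x : ℝ) : ℂ) + a * I)⁻¹ :=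
    .inv₀ (by fun_prop) fun x ↦ hne (-x)
  have reflect : ∫ x : ℝ in -R..R, (((-x : ℝ) : ℂ) + a * I)⁻¹ =
      ∫ x : ℝ in -R..R, ((x : ℂ) + a * I)⁻¹ := by
    rw [intervalIntegral.integral_comp_neg fun x : ℝ ↦ ((x : ℂ) + a * I)⁻¹, neg_neg]
  have even_part (x : ℝ) : ((x : ℂ) + a * I)⁻¹ + (((-x : ℝ) : ℂ) + a * I)⁻¹ =
      -2 * I * ((a / (a ^ 2 + x ^ 2) : ℝ) : ℂ) := by
    have h₁ := hne x
    have h₂ := hne (-x)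
    have h₃ : (a : ℂ) ^ 2 + (x : ℂ) ^ 2 ≠ 0 := by
      exact_mod_cast (by positivity : a ^ 2 + x ^ 2 ≠ 0)
    push_cast at h₂ ⊢
    field_simp
    linear_combination 2 * I * (a : ℂ) ^ 3 * I_sq
  have double : ∫ x : ℝ in -R..R, (((x : ℂ) + a * I)⁻¹ + (((-x : ℝ) : ℂ) + a * I)⁻¹) =
      -2 * I * ((2 * Real.arctan (R / a) : ℝ) : ℂ) := by
    simp_rw [even_part]
    rw [intervalIntegral.integral_const_mul, intervalIntegral.integral_ofReal,
      integral_div_sq_add_sq, neg_div, Real.arctan_neg, sub_neg_eq_add, two_mul]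
  rw [intervalIntegral.integral_add (hcont.intervalIntegrable _ _)
    (hcont_neg.intervalIntegrable _ _), reflect] at double
  rw [ofReal_mul, ofReal_ofNat] at double
  linear_combination double / 2

lemma tendsto_integral_inv_ofReal_add_mul_I_of_pos {a : ℝ} (ha : 0 < a) :
    Tendsto (fun R : ℝ ↦ ∫ x : ℝ in -R..R, ((x : ℂ) + a * I)⁻¹) atTop (𝓝 (-(π * I))) := by
  simp_rw [integral_inv_ofReal_add_mul_I ha.ne']
  have harctan : Tendsto (fun R : ℝ ↦ Real.arctan (R / a)) atTop (𝓝 (π / 2)) :=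
    (Real.tendsto_arctan_atTop.mono_right nhdsWithin_le_nhds).comp (tendsto_id.atTop_div_const ha)
  rw [show -(π * I) = -2 * I * ((π / 2 : ℝ) : ℂ) by push_cast; ring]
  exact ((continuous_ofReal.tendsto _).comp harctan).const_mul (-2 * I)

lemma tendsto_integral_inv_ofReal_add_mul_I_of_neg {a : ℝ} (ha : a < 0) :
    Tendsto (fun R : ℝ ↦ ∫ x : ℝ in -R..R, ((x : ℂ) + a * I)⁻¹) atTop (𝓝 (π * I)) := by
  simp_rw [integral_inv_ofReal_add_mul_I ha.ne]
  have harctan : Tendsto (fun R : ℝ ↦ Real.arctan (R / a)) atTop (𝓝 (-(π / 2))) :=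
    (Real.tendsto_arctan_atBot.mono_right nhdsWithin_le_nhds).comp
      (tendsto_id.atTop_div_const_of_neg ha)
  rw [show π * I = -2 * I * ((-(π / 2) : ℝ) : ℂ) by push_cast; ring]
  exact ((continuous_ofReal.tendsto _).comp harctan).const_mul (-2 * I)

lemma tendsto_intervalIntegral_ofReal_add_mul_I {E : Type*} [NormedAddCommGroup E]
    [NormedSpace ℝ E] {h : ℂ → E} {a b : ℝ}
    (hdecay : Tendsto h (cobounded ℂ ⊓ 𝓟 {z | z.im ∈ uIcc a b}) (𝓝 0)) :
    Tendsto (fun x : ℝ ↦ ∫ y : ℝ in a..b, h (x + y * I)) (cobounded ℝ) (𝓝 0) := by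
  rw [NormedAddGroup.tendsto_nhds_zero]
  intro ε hε
  have hδ : 0 < ε / (|b - a| + 1) := by positivity
  obtain ⟨M, -, hM⟩ := (hasBasis_cobounded_norm.inf_principal _).eventually_iff.1
    (NormedAddGroup.tendsto_nhds_zero.1 hdecay _ hδ)
  filter_upwards [hasBasis_cobounded_norm.mem_of_mem (i := M) trivial] with x hx
  calc ‖∫ y : ℝ in a..b, h (x + y * I)‖
      ≤ ε / (|b - a| + 1) * |b - a| := by
        refine intervalIntegral.norm_integral_le_of_norm_le_const fun y hy ↦ (hM ⟨?_, ?_⟩).le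
        · exact le_trans hx (by simpa using abs_re_le_norm ((x : ℂ) + y * I))
        · simpa using uIoc_subset_uIcc hy
    _ < ε := by
        rw [div_mul_eq_mul_div, div_lt_iff₀ (by positivity)]
        gcongr
        exact lt_add_one _

lemma tendsto_sub_intervalIntegral_of_differentiableOn {E : Type*} [NormedAddCommGroup E]
    [NormedSpace ℂ E] {h : ℂ → E} {a b : ℝ}
    (hd : DifferentiableOn ℂ h {z | z.im ∈ uIcc a b})
    (hdecay : Tendsto h (cobounded ℂ ⊓ 𝓟 {z | z.im ∈ uIcc a b}) (𝓝 0)) :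
    Tendsto (fun R : ℝ ↦ (∫ x : ℝ in -R..R, h (x + a * I)) - ∫ x : ℝ in -R..R, h (x + b * I))
      atTop (𝓝 0) := by
  have hrect (R : ℝ) :
      I • (∫ y : ℝ in a..b, h ((-R : ℝ) + y * I)) - I • (∫ y : ℝ in a..b, h (R + y * I)) =
        (∫ x : ℝ in -R..R, h (x + a * I)) - ∫ x : ℝ in -R..R, h (x + b * I) := by
    have := integral_boundary_rect_eq_zero_of_differentiableOn h ⟨-R, a⟩ ⟨R, b⟩
      (hd.mono fun z hz ↦ hz.2)
    rw [eq_comm, ← sub_eq_zero, ← this]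
    dsimp only
    abel
  have hside := tendsto_intervalIntegral_ofReal_add_mul_I hdecay
  have hright := hside.comp (tendsto_id.mono_right IsOrderBornology.atTop_le_cobounded)
  have hleft := hside.comp (tendsto_neg_atTop_atBot.mono_right IsOrderBornology.atBot_le_cobounded)
  simp_rw [← hrect]
  simpa using (hleft.const_smul I).sub (hright.const_smul I)

lemma exists_differentiableOn_eq_sub_mul_inv {f : ℂ → ℂ} {s : Set ℂ} {p ρ : ℂ} (hs : s ∈ 𝓝 p)
    (hd : DifferentiableOn ℂ f (s \ {p}))
    (hρ : Tendsto (fun z ↦ (z - p) * f z) (𝓝[≠] p) (𝓝 ρ)) :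
    ∃ h : ℂ → ℂ, DifferentiableOn ℂ h s ∧ ∀ z ≠ p, h z = f z - ρ * (z - p)⁻¹ := by
  set g : ℂ → ℂ := fun z ↦ f z - ρ * (z - p)⁻¹
  have hgd : DifferentiableOn ℂ g (s \ {p}) := by
    refine hd.sub fun z hz ↦ DifferentiableAt.differentiableWithinAt ?_
    have := sub_ne_zero.2 hz.2
    fun_prop (disch := assumption)
  have hg : g =o[𝓝[≠] p] fun z ↦ (z - p)⁻¹ := by
    refine isLittleO_of_tendsto' ?_ ?_
    · filter_upwards [self_mem_nhdsWithin] with z hz h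
      exact absurd (inv_eq_zero.1 h) (sub_ne_zero.2 hz)
    · rw [← sub_self ρ]
      refine (hρ.sub_const ρ).congr' ?_
      filter_upwards [self_mem_nhdsWithin] with z hz
      have := sub_ne_zero.2 hz
      simp only [g]
      field_simp
  have hconst : (fun _ : ℂ ↦ g p) =o[𝓝[≠] p] fun z ↦ (z - p)⁻¹ := by
    refine isLittleO_const_left.2 (Or.inr ?_)
    refine tendsto_norm_inv_nhdsNE_zero_atTop.comp
      (tendsto_nhdsWithin_of_tendsto_nhds_of_eventually_within _ ?_ ?_)
    · exact ((continuous_id.sub continuous_const).tendsto' p 0 (sub_self p)).mono_left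
        nhdsWithin_le_nhds
    · filter_upwards [self_mem_nhdsWithin] with z hz using sub_ne_zero.2 hz
  exact ⟨_, differentiableOn_update_limUnder_of_isLittleO hs hgd (hg.sub hconst),
    fun z hz ↦ Function.update_of_ne hz _ _⟩

-- Cauchy's theorem applies to `f` minus its polar part `ρ / z`, and the integrals of `1 / z` along
-- the edges are computed directly.
lemma integral_sub_integral_eq_two_pi_I_mul_residue {f : ℂ → ℂ} {a b : ℝ} {ρ : ℂ}
    (ha : a < 0) (hb : 0 < b) (hd : DifferentiableOn ℂ f ({z | z.im ∈ Icc a b} \ {0}))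
    (hρ : Tendsto (fun z ↦ z * f z) (𝓝[≠] 0) (𝓝 ρ))
    (hdecay : Tendsto f (cobounded ℂ ⊓ 𝓟 {z | z.im ∈ Icc a b}) (𝓝 0))
    (hia : Integrable fun x : ℝ ↦ f (x + a * I)) (hib : Integrable fun x : ℝ ↦ f (x + b * I)) :
    (∫ x : ℝ, f (x + a * I)) - ∫ x : ℝ, f (x + b * I) = 2 * π * I * ρ := by
  have hnhds : {z : ℂ | z.im ∈ Icc a b} ∈ 𝓝 (0 : ℂ) :=
    continuous_im.continuousAt.preimage_mem_nhds (Icc_mem_nhds ha hb)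
  obtain ⟨h, hhd, hh⟩ := exists_differentiableOn_eq_sub_mul_inv hnhds hd (by simpa using hρ)
  simp only [sub_zero] at hh
  rw [← uIcc_of_le (ha.trans hb).le] at hhd hdecay
  have hhdecay : Tendsto h (cobounded ℂ ⊓ 𝓟 {z | z.im ∈ uIcc a b}) (𝓝 0) := by
    have hpole : Tendsto (fun z : ℂ ↦ ρ * z⁻¹) (cobounded ℂ ⊓ 𝓟 {z | z.im ∈ uIcc a b}) (𝓝 0) := by
      simpa using (tendsto_inv₀_cobounded.mono_left inf_le_left).const_mul ρ
    rw [← sub_zero (0 : ℂ)]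
    refine (hdecay.sub hpole).congr' ?_
    filter_upwards [mem_inf_of_left (eventually_ne_cobounded (0 : ℂ))] with z hz
    exact (hh z hz).symm
  have hlim {c : ℝ} {l : ℂ} (hc : c ≠ 0) (hi : Integrable fun x : ℝ ↦ f (x + c * I))
      (hl : Tendsto (fun R : ℝ ↦ ∫ x : ℝ in -R..R, ((x : ℂ) + c * I)⁻¹) atTop (𝓝 l)) :
      Tendsto (fun R : ℝ ↦ ∫ x : ℝ in -R..R, h (x + c * I)) atTop
        (𝓝 ((∫ x : ℝ, f (x + c * I)) - ρ * l)) := by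
    have hne (x : ℝ) : (x : ℂ) + c * I ≠ 0 := ofReal_add_mul_I_ne_zero x hc
    have hinv : Continuous fun x : ℝ ↦ ρ * ((x : ℂ) + c * I)⁻¹ :=
      continuous_const.mul (.inv₀ (by fun_prop) hne)
    simp_rw [hh _ (hne _), intervalIntegral.integral_sub hi.intervalIntegrable
      (hinv.intervalIntegrable _ _), intervalIntegral.integral_const_mul]
    exact (intervalIntegral_tendsto_integral hi tendsto_neg_atTop_atBot tendsto_id).sub
      (hl.const_mul ρ)
  have hsub := (hlim ha.ne hia (tendsto_integral_inv_ofReal_add_mul_I_of_neg ha)).sub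
    (hlim hb.ne' hib (tendsto_integral_inv_ofReal_add_mul_I_of_pos hb))
  linear_combination
    tendsto_nhds_unique hsub (tendsto_sub_intervalIntegral_of_differentiableOn hhd hhdecay)

/-! ### Slanted lines -/

/-- The parametrization of the line of slope `tan θ` through the real point `c` that underlies
`lineInt`. -/
noncomputable def slantLine (c θ t : ℝ) : ℂ := c + exp (θ * I) * t

/-- The closed strip swept out by the lines of direction `exp (θ * I)` whose intersection with the
real axis lies between `a` and `b`. -/
def slantStrip (a b θ : ℝ) : Set ℂ := {v | ∃ x ∈ Icc a b, ∃ t, slantLine x θ t = v}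

lemma continuous_slantLine (c θ : ℝ) : Continuous (slantLine c θ) := by
  unfold slantLine
  fun_prop

lemma im_mul_slantLine (u : ℂ) (x θ t : ℝ) :
    (u * slantLine x θ t).im = x * u.im + (u * exp (θ * I)).im * t := by
  rw [slantLine, mul_add, ← mul_assoc, add_im, im_mul_ofReal, im_mul_ofReal, mul_comm u.im]

lemma im_slantLine (x θ t : ℝ) : (slantLine x θ t).im = Real.sin θ * t := by
  rw [slantLine, add_im, ofReal_im, zero_add, im_mul_ofReal, exp_ofReal_mul_I_im]

lemma norm_slantLine_le (x θ t : ℝ) : ‖slantLine x θ t‖ ≤ |x| + |t| := by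
  simpa [slantLine, norm_exp_ofReal_mul_I] using norm_add_le (x : ℂ) (exp (θ * I) * t)

lemma lineInt_eq_integral_slantLine_mul (c θ : ℝ) (f : ℂ → ℂ) :
    lineInt c θ f = (∫ t, f (slantLine c θ t)) * exp (θ * I) :=
  integral_mul_const _ _

lemma lineInt_congr {c θ : ℝ} {f g : ℂ → ℂ} (h : ∀ t, f (slantLine c θ t) = g (slantLine c θ t)) :
    lineInt c θ f = lineInt c θ g := by
  simp only [lineInt_eq_integral_slantLine_mul, h]

lemma lineInt_const_mul (c θ : ℝ) (k : ℂ) (f : ℂ → ℂ) :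
    lineInt c θ (fun u ↦ k * f u) = k * lineInt c θ f := by
  simp only [lineInt_eq_integral_slantLine_mul, integral_const_mul, mul_assoc]

lemma lineInt_mul_const (c θ : ℝ) (f : ℂ → ℂ) (k : ℂ) :
    lineInt c θ (fun u ↦ f u * k) = lineInt c θ f * k := by
  simp only [mul_comm _ k, lineInt_const_mul]

lemma slantLine_sub_one (c θ t : ℝ) : slantLine (c - 1) θ t = slantLine c θ t - 1 := by
  simp only [slantLine, ofReal_sub, ofReal_one]
  ring

lemma exp_mul_I_mul_ofReal_sub (c θ x : ℝ) :
    exp (θ * I) * (x + ((-(c * Real.sin θ) : ℝ) : ℂ) * I) =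
      slantLine c θ (x - c * Real.cos θ) := by
  simp only [slantLine, exp_mul_I]
  push_cast
  linear_combination (-(c * sin θ ^ 2) : ℂ) * I_sq + c * sin_sq_add_cos_sq (θ : ℂ)

lemma lineInt_eq_integral_horizontal (c θ : ℝ) (f : ℂ → ℂ) :
    lineInt c θ f =
      (∫ x : ℝ, f (exp (θ * I) * (x + ((-(c * Real.sin θ) : ℝ) : ℂ) * I))) * exp (θ * I) := by
  simp only [exp_mul_I_mul_ofReal_sub, lineInt_eq_integral_slantLine_mul]
  rw [integral_sub_right_eq_self fun t ↦ f (slantLine c θ t)]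

lemma exp_mul_I_mul_mem_slantStrip {a b θ : ℝ} (hθ : 0 < Real.sin θ) {z : ℂ}
    (hz : z.im ∈ Icc (-(b * Real.sin θ)) (-(a * Real.sin θ))) :
    exp (θ * I) * z ∈ slantStrip a b θ := by
  refine ⟨-z.im / Real.sin θ, ⟨?_, ?_⟩, z.re - -z.im / Real.sin θ * Real.cos θ, ?_⟩
  · rw [le_div_iff₀ hθ]
    linarith [hz.2]
  · rw [div_le_iff₀ hθ]
    linarith [hz.1]
  · rw [← exp_mul_I_mul_ofReal_sub, div_mul_cancel₀ _ hθ.ne', neg_neg, re_add_im]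

lemma lineInt_sub_lineInt_eq_two_pi_I_mul_residue {f : ℂ → ℂ} {a b θ : ℝ} {ρ : ℂ}
    (hθ : 0 < Real.sin θ) (ha : a < 0) (hb : 0 < b)
    (hd : DifferentiableOn ℂ f (slantStrip a b θ \ {0}))
    (hρ : Tendsto (fun v ↦ v * f v) (𝓝[≠] 0) (𝓝 ρ))
    (hdecay : Tendsto f (cobounded ℂ ⊓ 𝓟 (slantStrip a b θ)) (𝓝 0))
    (hia : Integrable fun t ↦ f (slantLine a θ t))
    (hib : Integrable fun t ↦ f (slantLine b θ t)) :
    lineInt b θ f - lineInt a θ f = 2 * π * I * ρ := by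
  set e : ℂ := exp (θ * I) with he
  have he0 : e ≠ 0 := exp_ne_zero _
  have hmaps : MapsTo (e * ·) {z | z.im ∈ Icc (-(b * Real.sin θ)) (-(a * Real.sin θ))}
      (slantStrip a b θ) := fun z hz ↦ exp_mul_I_mul_mem_slantStrip hθ hz
  have hhor {c : ℝ} (hi : Integrable fun t ↦ f (slantLine c θ t)) :
      Integrable fun x : ℝ ↦ f (e * (x + ((-(c * Real.sin θ) : ℝ) : ℂ) * I)) := by
    simp only [he, exp_mul_I_mul_ofReal_sub]
    exact hi.comp_sub_right (c * Real.cos θ)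
  have hpunct : Tendsto (e * ·) (𝓝[≠] 0) (𝓝[≠] (0 : ℂ)) :=
    tendsto_nhdsWithin_of_tendsto_nhds_of_eventually_within _
      ((continuous_const_mul e).tendsto' 0 0 (mul_zero e) |>.mono_left nhdsWithin_le_nhds)
      (eventually_mem_nhdsWithin.mono fun z hz ↦ mul_ne_zero he0 hz)
  have key := integral_sub_integral_eq_two_pi_I_mul_residue (f := fun z ↦ f (e * z))
    (ρ := e⁻¹ * ρ) (neg_lt_zero.2 (mul_pos hb hθ)) (neg_pos.2 (mul_neg_of_neg_of_pos ha hθ))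
    (hd.comp (by fun_prop) fun z hz ↦ ⟨hmaps hz.1, mul_ne_zero he0 hz.2⟩)
    (((hρ.comp hpunct).const_mul e⁻¹).congr fun z ↦ by
      simp only [Function.comp_apply, mul_assoc, inv_mul_cancel_left₀ he0])
    (hdecay.comp ((tendsto_mul_left_cobounded he0).inf hmaps.tendsto)) (hhor hib) (hhor hia)
  rw [lineInt_eq_integral_horizontal, lineInt_eq_integral_horizontal, ← he, ← sub_mul, key]
  field_simp

/-! ### The kernel -/

lemma integrable_exp_neg_mul_abs {m : ℝ} (hm : 0 < m) :
    Integrable fun t : ℝ ↦ Real.exp (-(m * |t|)) := by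
  refine LocallyIntegrable.integrable_of_isBigO_atTop_of_norm_isNegInvariant
    (g := fun t ↦ Real.exp (-m * t)) (Continuous.locallyIntegrable (by fun_prop))
    (.of_forall fun t ↦ by simp) ?_
    ⟨Ioi 0, Ioi_mem_atTop 0, exp_neg_integrableOn_Ioi 0 hm⟩
  refine EventuallyEq.isBigO ?_
  filter_upwards [eventually_ge_atTop 0] with t ht
  rw [abs_of_nonneg ht, neg_mul]

lemma max_one_exp_le_two_mul_abs_exp_sub_one {s : ℝ} (hs : 1 ≤ |s|) :
    max 1 (Real.exp s) ≤ 2 * |Real.exp s - 1| := by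
  rcases le_abs.1 hs with hs | hs
  · have := Real.add_one_le_exp s
    rw [abs_of_nonneg (by linarith), max_le_iff]
    constructor <;> linarith
  · have hlt : Real.exp s ≤ 1 / 2 := by
      have := Real.add_one_le_exp (-s)
      rw [← neg_neg s, Real.exp_neg (-s), inv_le_comm₀ (Real.exp_pos _) (by norm_num)]
      linarith
    rw [abs_of_nonpos (by linarith), max_le_iff]
    constructor <;> linarith

lemma exp_mul_le_max_mul_exp_neg_min_mul_abs (α σ t : ℝ) :
    Real.exp (α * t) ≤ max 1 (Real.exp (σ * t)) * Real.exp (-(min α (σ - α) * |t|)) := by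
  rcases le_total 0 t with ht | ht
  · have h := mul_le_mul_of_nonneg_right (min_le_right α (σ - α)) ht
    calc Real.exp (α * t)
        ≤ Real.exp (σ * t) * Real.exp (-(min α (σ - α) * |t|)) := by
          rw [← Real.exp_add, Real.exp_le_exp, abs_of_nonneg ht]
          linarith
      _ ≤ _ := by gcongr; exact le_max_right _ _
  · have h := mul_le_mul_of_nonpos_right (min_le_left α (σ - α)) ht
    calc Real.exp (α * t)
        ≤ 1 * Real.exp (-(min α (σ - α) * |t|)) := by
          rw [one_mul, Real.exp_le_exp, abs_of_nonpos ht]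
          linarith
      _ ≤ _ := by gcongr; exact le_max_left _ _

/-- The kernel `e^{-2πiuv} / (e^{-2πiv} - 1)`, whose integral over `v ∈ 0 ↖ 1` is
`1 / (e^{2πiu} - 1)`. -/
noncomputable def siegelKernel (u v : ℂ) : ℂ :=
  exp (-(2 * π * I * u * v)) / (exp (-(2 * π * I * v)) - 1)

lemma siegelKernel_sub_one (u v : ℂ) :
    siegelKernel u (v - 1) = exp (2 * π * I * u) * siegelKernel u v := by
  have hnum : -(2 * π * I * u * (v - 1)) = 2 * π * I * u + -(2 * π * I * u * v) := by ring
  have hden : -(2 * π * I * (v - 1)) = -(2 * π * I * v) + 2 * π * I := by ring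
  rw [siegelKernel, siegelKernel, hnum, hden, exp_add, exp_add _ (2 * π * I), exp_two_pi_mul_I,
    mul_one, mul_div_assoc]

lemma norm_exp_neg_two_pi_I_mul (z : ℂ) :
    ‖exp (-(2 * π * I * z))‖ = Real.exp (2 * π * z.im) := by
  rw [norm_exp, show -(2 * π * I * z) = ((-(2 * π) : ℝ) : ℂ) * (z * I) by push_cast; ring,
    re_ofReal_mul, mul_I_re, neg_mul_neg]

lemma norm_siegelKernel_slantLine_le {θ t : ℝ} (ht : 1 ≤ |2 * π * Real.sin θ * t|)
    (u : ℂ) (x : ℝ) :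
    ‖siegelKernel u (slantLine x θ t)‖ ≤ 2 * Real.exp (2 * π * x * u.im) *
      Real.exp (-(2 * π * min (u * exp (θ * I)).im (Real.sin θ - (u * exp (θ * I)).im) * |t|)) := by
  set α := (u * exp (θ * I)).im with hα
  have hnum : ‖exp (-(2 * π * I * u * slantLine x θ t))‖ =
      Real.exp (2 * π * x * u.im) * Real.exp (2 * π * α * t) := by
    rw [mul_assoc (2 * π * I), norm_exp_neg_two_pi_I_mul, im_mul_slantLine, ← Real.exp_add, ← hα]
    ring_nf
  have hden : ‖exp (-(2 * π * I * slantLine x θ t))‖ = Real.exp (2 * π * Real.sin θ * t) := by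
    rw [norm_exp_neg_two_pi_I_mul, im_slantLine, mul_assoc (2 * π)]
  have hdist : |Real.exp (2 * π * Real.sin θ * t) - 1| ≤
      ‖exp (-(2 * π * I * slantLine x θ t)) - 1‖ := by
    simpa only [hden, norm_one] using abs_norm_sub_norm_le (exp (-(2 * π * I * slantLine x θ t))) 1
  have hmax := (max_one_exp_le_two_mul_abs_exp_sub_one ht).trans
    (mul_le_mul_of_nonneg_left hdist zero_le_two)
  have hpos := (lt_max_of_lt_left one_pos).trans_le hmax
  have hexp := exp_mul_le_max_mul_exp_neg_min_mul_abs (2 * π * α) (2 * π * Real.sin θ) t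
  rw [← mul_sub, ← mul_min_of_nonneg _ _ Real.two_pi_pos.le] at hexp
  rw [siegelKernel, norm_div, hnum, div_le_iff₀ (pos_of_mul_pos_right hpos zero_le_two)]
  calc Real.exp (2 * π * x * u.im) * Real.exp (2 * π * α * t)
      ≤ Real.exp (2 * π * x * u.im) * (2 * ‖exp (-(2 * π * I * slantLine x θ t)) - 1‖ *
          Real.exp (-(2 * π * min α (Real.sin θ - α) * |t|))) := by
        gcongr
        exact hexp.trans (by gcongr)
    _ = _ := by ring

lemma exists_int_eq_of_exp_slantLine_eq_one {x θ t : ℝ} (hθ : Real.sin θ ≠ 0)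
    (h : exp (-(2 * π * I * slantLine x θ t)) = 1) : t = 0 ∧ ∃ n : ℤ, x = n := by
  obtain ⟨n, hn⟩ := exp_eq_one_iff.1 h
  have hline : slantLine x θ t = (-n : ℤ) := by
    push_cast
    refine mul_left_cancel₀ two_pi_I_ne_zero ?_
    linear_combination -hn
  have ht : t = 0 := by
    have him := congr_arg im hline
    rw [im_slantLine, intCast_im, mul_eq_zero] at him
    exact him.resolve_left hθ
  refine ⟨ht, -n, ?_⟩
  rw [slantLine, ht, ofReal_zero, mul_zero, add_zero] at hline
  exact_mod_cast hline

lemma ne_intCast_of_mem_Ioo {c : ℝ} (hc : c ∈ Ioo 0 1) (n : ℤ) : c ≠ n := by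
  rintro rfl
  have h₀ : 0 < n := by exact_mod_cast hc.1
  have h₁ : n < 1 := by exact_mod_cast hc.2
  omega

lemma exp_slantLine_ne_one {x θ : ℝ} (hθ : Real.sin θ ≠ 0) (hx : ∀ n : ℤ, x ≠ n) (t : ℝ) :
    exp (-(2 * π * I * slantLine x θ t)) ≠ 1 := fun h ↦
  let ⟨n, hn⟩ := (exists_int_eq_of_exp_slantLine_eq_one hθ h).2
  hx n hn

lemma continuous_siegelKernel_slantLine {x θ : ℝ} (hθ : Real.sin θ ≠ 0) (hx : ∀ n : ℤ, x ≠ n)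
    (u : ℂ) : Continuous fun t ↦ siegelKernel u (slantLine x θ t) := by
  have := continuous_slantLine x θ
  exact .div (by fun_prop) (by fun_prop) fun t ↦ sub_ne_zero.2 (exp_slantLine_ne_one hθ hx t)

lemma differentiableOn_siegelKernel {a b θ : ℝ} (hθ : Real.sin θ ≠ 0) (ha : -1 < a) (hb : b < 1)
    (u : ℂ) : DifferentiableOn ℂ (siegelKernel u) (slantStrip a b θ \ {0}) := by
  rintro _ ⟨⟨x, hx, t, rfl⟩, hv⟩
  refine (DifferentiableAt.div (by fun_prop) (by fun_prop)
    (sub_ne_zero.2 fun h ↦ hv ?_)).differentiableWithinAt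
  obtain ⟨rfl, n, rfl⟩ := exists_int_eq_of_exp_slantLine_eq_one hθ h
  have hn₁ : -1 < n := by exact_mod_cast ha.trans_le hx.1
  have hn₂ : n < 1 := by exact_mod_cast hx.2.trans_lt hb
  obtain rfl : n = 0 := by omega
  simp [slantLine]

lemma tendsto_mul_siegelKernel_zero (u : ℂ) :
    Tendsto (fun v ↦ v * siegelKernel u v) (𝓝[≠] 0) (𝓝 (-(2 * π * I))⁻¹) := by
  have hnum : Tendsto (fun v ↦ exp (-(2 * π * I * u * v))) (𝓝[≠] 0) (𝓝 1) :=
    (Continuous.tendsto' (by fun_prop) 0 1 (by simp)).mono_left nhdsWithin_le_nhds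
  have hderiv : HasDerivAt (fun v ↦ exp (-(2 * π * I) * v)) (-(2 * π * I)) 0 := by
    simpa using ((hasDerivAt_id (0 : ℂ)).const_mul (-(2 * π * I))).cexp
  have hden := hderiv.tendsto_slope_zero.inv₀ (neg_ne_zero.2 two_pi_I_ne_zero)
  rw [← one_mul (-(2 * π * I))⁻¹]
  refine (hnum.mul hden).congr fun v ↦ ?_
  simp only [siegelKernel, zero_add, mul_zero, exp_zero, smul_eq_mul, mul_inv, inv_inv, neg_mul]
  ring

lemma integrable_siegelKernel_slantLine {u : ℂ} {θ x : ℝ} (hu₀ : 0 < (u * exp (θ * I)).im)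
    (hu₁ : (u * exp (θ * I)).im < Real.sin θ) (hx : ∀ n : ℤ, x ≠ n) :
    Integrable fun t ↦ siegelKernel u (slantLine x θ t) := by
  have hθ : 0 < Real.sin θ := hu₀.trans hu₁
  have hm : 0 < 2 * π * min (u * exp (θ * I)).im (Real.sin θ - (u * exp (θ * I)).im) :=
    mul_pos Real.two_pi_pos (lt_min hu₀ (sub_pos.2 hu₁))
  refine (continuous_siegelKernel_slantLine hθ.ne' hx u).locallyIntegrable
    |>.integrable_of_isBigO_cocompact (.of_bound (2 * Real.exp (2 * π * x * u.im)) ?_)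
      ((integrable_exp_neg_mul_abs hm).integrableAtFilter _)
  have hk : 0 < 2 * π * Real.sin θ := mul_pos Real.two_pi_pos hθ
  have hlarge := (tendsto_norm_cocompact_atTop (E := ℝ)).const_mul_atTop hk
  filter_upwards [hlarge.eventually_ge_atTop 1] with t ht
  rw [Real.norm_of_nonneg (Real.exp_pos _).le]
  refine norm_siegelKernel_slantLine_le ?_ u x
  rwa [abs_mul, abs_of_pos hk]

lemma tendsto_siegelKernel_cobounded {u : ℂ} {θ : ℝ} (hu₀ : 0 < (u * exp (θ * I)).im)
    (hu₁ : (u * exp (θ * I)).im < Real.sin θ) (a b : ℝ) :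
    Tendsto (siegelKernel u) (cobounded ℂ ⊓ 𝓟 (slantStrip a b θ)) (𝓝 0) := by
  have hθ : 0 < 2 * π * Real.sin θ := mul_pos Real.two_pi_pos (hu₀.trans hu₁)
  set m := 2 * π * min (u * exp (θ * I)).im (Real.sin θ - (u * exp (θ * I)).im)
  have hm : 0 < m := mul_pos Real.two_pi_pos (lt_min hu₀ (sub_pos.2 hu₁))
  set M := max |a| |b|
  have hdist : Tendsto (fun v : ℂ ↦ ‖v‖ - M) (cobounded ℂ ⊓ 𝓟 (slantStrip a b θ)) atTop :=
    tendsto_atTop_add_const_right _ _ (tendsto_norm_cobounded_atTop.mono_left inf_le_left)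
  set C := 2 * Real.exp (2 * π * M * |u.im|) with hC
  have hbound : Tendsto (fun v : ℂ ↦ C * Real.exp (-(m * (‖v‖ - M))))
      (cobounded ℂ ⊓ 𝓟 (slantStrip a b θ)) (𝓝 0) := by
    rw [← mul_zero C]
    exact (Real.tendsto_exp_neg_atTop_nhds_zero.comp (hdist.const_mul_atTop hm)).const_mul _
  refine squeeze_zero_norm' ?_ hbound
  filter_upwards [(hdist.const_mul_atTop hθ).eventually_ge_atTop 1,
    mem_inf_of_right (mem_principal_self _)] with v hv hmem
  obtain ⟨x, hx, t, rfl⟩ := hmem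
  have hxM : |x| ≤ M := abs_le_max_abs_abs hx.1 hx.2
  have ht : ‖slantLine x θ t‖ - M ≤ |t| := by
    linarith [norm_slantLine_le x θ t]
  have hxu : x * u.im ≤ M * |u.im| :=
    (le_abs_self _).trans ((abs_mul x u.im).trans_le (by gcongr))
  refine (norm_siegelKernel_slantLine_le ?_ u x).trans ?_
  · rw [abs_mul, abs_of_pos hθ]
    exact hv.trans (by gcongr)
  · rw [hC, mul_assoc (2 * π) x, mul_assoc (2 * π) M]
    gcongr

lemma lineInt_siegelKernel {u : ℂ} {c θ : ℝ} (hu₀ : 0 < (u * exp (θ * I)).im)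
    (hu₁ : (u * exp (θ * I)).im < Real.sin θ) (hc : c ∈ Ioo 0 1) :
    lineInt c θ (siegelKernel u) = (exp (2 * π * I * u) - 1)⁻¹ := by
  have hθ : 0 < Real.sin θ := hu₀.trans hu₁
  have hne := ne_intCast_of_mem_Ioo hc
  have hne_sub (n : ℤ) : c - 1 ≠ n := fun h ↦ hne (n + 1) (by push_cast; linarith)
  have hshift : lineInt (c - 1) θ (siegelKernel u) =
      exp (2 * π * I * u) * lineInt c θ (siegelKernel u) := by
    simp only [lineInt_eq_integral_slantLine_mul, slantLine_sub_one, siegelKernel_sub_one,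
      integral_const_mul, mul_assoc]
  have hres := lineInt_sub_lineInt_eq_two_pi_I_mul_residue hθ (sub_neg.2 hc.2) hc.1
    (differentiableOn_siegelKernel (a := c - 1) hθ.ne' (by linarith [hc.1]) hc.2 u)
    (tendsto_mul_siegelKernel_zero u) (tendsto_siegelKernel_cobounded hu₀ hu₁ _ _)
    (integrable_siegelKernel_slantLine hu₀ hu₁ hne_sub)
    (integrable_siegelKernel_slantLine hu₀ hu₁ hne)
  rw [inv_neg, mul_neg, mul_inv_cancel₀ two_pi_I_ne_zero, hshift] at hres
  refine eq_inv_of_mul_eq_one_left ?_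
  linear_combination -hres

/-! ### The Gamma integral with a complex parameter -/

lemma norm_cexp_neg_mul_mul_cpow (z s : ℂ) {w : ℝ} (hw : 0 < w) :
    ‖exp (-(z * w)) * (w : ℂ) ^ s‖ = Real.exp (-(z.re * w)) * w ^ s.re := by
  rw [norm_mul, norm_cpow_eq_rpow_re_of_pos hw, norm_exp, neg_re, re_mul_ofReal]

lemma integrableOn_exp_neg_mul_mul_rpow {b r : ℝ} (hb : 0 < b) (hr : -1 < r) :
    IntegrableOn (fun w : ℝ ↦ Real.exp (-(b * w)) * w ^ r) (Ioi 0) := by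
  simpa [mul_comm] using integrableOn_rpow_mul_exp_neg_mul_rpow (p := 1) hr one_pos hb

lemma integrableOn_cexp_neg_mul_mul_cpow {z s : ℂ} (hz : 0 < z.re) (hs : -1 < s.re) :
    IntegrableOn (fun w : ℝ ↦ exp (-(z * w)) * (w : ℂ) ^ s) (Ioi 0) := by
  refine (integrableOn_exp_neg_mul_mul_rpow hz hs).mono' (by fun_prop) ?_
  filter_upwards [ae_restrict_mem measurableSet_Ioi] with w hw
  exact (norm_cexp_neg_mul_mul_cpow z s hw).le

lemma hasDerivAt_integral_cexp_neg_mul_mul_cpow {z s : ℂ} (hz : 0 < z.re) (hs : -1 < s.re) :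
    HasDerivAt (fun z : ℂ ↦ ∫ w in Ioi (0 : ℝ), exp (-(z * w)) * (w : ℂ) ^ s)
      (∫ w in Ioi (0 : ℝ), -(exp (-(z * w)) * (w : ℂ) ^ (s + 1))) z := by
  have hhalf : {y : ℂ | z.re / 2 < y.re} ∈ 𝓝 z :=
    (isOpen_lt continuous_const continuous_re).mem_nhds (half_lt_self hz)
  have hs' : -1 < (s + 1).re := by
    rw [add_re, one_re]
    linarith
  refine (hasDerivAt_integral_of_dominated_loc_of_deriv_le
    (F := fun (z : ℂ) (w : ℝ) ↦ exp (-(z * w)) * (w : ℂ) ^ s)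
    (F' := fun (z : ℂ) (w : ℝ) ↦ -(exp (-(z * w)) * (w : ℂ) ^ (s + 1))) hhalf
    (.of_forall fun y ↦ by fun_prop) (integrableOn_cexp_neg_mul_mul_cpow hz hs) (by fun_prop) ?_
    (integrableOn_exp_neg_mul_mul_rpow (half_pos hz) hs') ?_).2
  · filter_upwards [ae_restrict_mem measurableSet_Ioi] with w hw y hy
    have hw : 0 < w := hw
    rw [norm_neg, norm_cexp_neg_mul_mul_cpow _ _ hw]
    gcongr
  · filter_upwards [ae_restrict_mem measurableSet_Ioi] with w hw y _
    have hw : (w : ℂ) ≠ 0 := ofReal_ne_zero.2 hw.ne'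
    refine (((hasDerivAt_id' y).mul_const (w : ℂ)).neg.cexp.mul_const _).congr_deriv ?_
    rw [cpow_add _ _ hw, cpow_one, Pi.neg_apply]
    ring

lemma integral_cexp_neg_mul_mul_cpow {z s : ℂ} (hz : 0 < z.re) (hs : 0 < s.re) :
    ∫ w in Ioi (0 : ℝ), exp (-(z * w)) * (w : ℂ) ^ (s - 1) = Gamma s * z ^ (-s) := by
  have hopen : IsOpen {z : ℂ | 0 < z.re} := isOpen_lt continuous_const continuous_re
  have hleft : AnalyticOnNhd ℂ
      (fun z : ℂ ↦ ∫ w in Ioi (0 : ℝ), exp (-(z * w)) * (w : ℂ) ^ (s - 1)) {z | 0 < z.re} := by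
    refine DifferentiableOn.analyticOnNhd (fun y hy ↦ ?_) hopen
    exact (hasDerivAt_integral_cexp_neg_mul_mul_cpow hy (by simpa)).differentiableAt
      |>.differentiableWithinAt
  have hright : AnalyticOnNhd ℂ (fun z : ℂ ↦ Gamma s * z ^ (-s)) {z | 0 < z.re} := fun y hy ↦
    analyticAt_const.mul (analyticAt_id.cpow analyticAt_const (Or.inl hy))
  have hreal {x : ℝ} (hx : 0 < x) :
      ∫ w in Ioi (0 : ℝ), exp (-(x * w)) * (w : ℂ) ^ (s - 1) = Gamma s * (x : ℂ) ^ (-s) := by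
    simp_rw [mul_comm (exp _)]
    rw [integral_cpow_mul_exp_neg_mul_Ioi hs hx, one_div, cpow_neg,
      inv_cpow _ _ (by rw [arg_ofReal_of_nonneg hx.le]; exact Real.pi_ne_zero.symm), mul_comm]
  have hreals : Tendsto (fun x : ℝ ↦ (x : ℂ)) (𝓝[≠] 1) (𝓝[≠] ((1 : ℝ) : ℂ)) :=
    continuous_ofReal.continuousAt.continuousWithinAt.tendsto_nhdsWithin fun x hx ↦
      ofReal_injective.ne hx
  refine hleft.eqOn_of_preconnected_of_frequently_eq hright
    (convex_halfSpace_re_gt 0).isPreconnected (z₀ := ((1 : ℝ) : ℂ)) (by simp)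
    (hreals.frequently (Eventually.frequently ?_)) hz
  filter_upwards [mem_nhdsWithin_of_mem_nhds (Ioi_mem_nhds one_pos)] with x hx using hreal hx

lemma mul_cpow_of_re_pos {a z : ℂ} (ha : 0 < a.re) (hz : 0 < z.re) (r : ℂ) :
    (a * z) ^ r = a ^ r * z ^ r := by
  have ha₀ : a ≠ 0 := ne_of_apply_ne re ha.ne'
  have hz₀ : z ≠ 0 := ne_of_apply_ne re hz.ne'
  have harg_a := abs_lt.1 (abs_arg_lt_pi_div_two_iff.2 (Or.inl ha))
  have harg_z := abs_lt.1 (abs_arg_lt_pi_div_two_iff.2 (Or.inl hz))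
  rw [cpow_def_of_ne_zero (mul_ne_zero ha₀ hz₀), cpow_def_of_ne_zero ha₀, cpow_def_of_ne_zero hz₀,
    log_mul ha₀ hz₀ ⟨by linarith, by linarith⟩, add_mul, exp_add]

lemma exp_mul_I_mul_cpow {θ : ℝ} (hθ : θ ∈ Ioo (-(π / 2)) (π / 2)) {u : ℂ}
    (hu : 0 < (exp (θ * I) * u).re) (r : ℂ) :
    (exp (θ * I) * u) ^ r = exp (θ * I * r) * u ^ r := by
  have hre : 0 < (exp (-θ * I)).re := by
    rw [← ofReal_neg, exp_ofReal_mul_I_re, Real.cos_neg]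
    exact Real.cos_pos_of_mem_Ioo hθ
  have him : (-θ * I : ℂ).im = -θ := by rw [← ofReal_neg, im_ofReal_mul, I_im, mul_one]
  have hlog : log (exp (-θ * I)) = -θ * I :=
    log_exp (by linarith [hθ.2, Real.pi_pos]) (by linarith [hθ.1, Real.pi_pos])
  -- `u` itself may lie outside the right half-plane, unlike `exp (-θ * I)` and `exp (θ * I) * u`.
  have hsplit := mul_cpow_of_re_pos hre hu r
  rw [← mul_assoc, ← exp_add, neg_mul, neg_add_cancel, exp_zero, one_mul, ← neg_mul,
    cpow_def_of_ne_zero (exp_ne_zero _), hlog] at hsplit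
  rw [hsplit, ← mul_assoc, ← exp_add, neg_mul, neg_mul, add_neg_cancel, exp_zero, one_mul]

lemma ofReal_sqrt_cpow {x : ℝ} (hx : 0 < x) (r : ℂ) : (√x : ℂ) ^ r = (x : ℂ) ^ (r / 2) := by
  have hne : (√x : ℂ) ≠ 0 := ofReal_ne_zero.2 (Real.sqrt_pos.2 hx).ne'
  nth_rw 2 [← Real.mul_self_sqrt hx.le]
  rw [ofReal_mul, mul_cpow_ofReal_nonneg (Real.sqrt_nonneg x) (Real.sqrt_nonneg x),
    ← cpow_add _ _ hne, add_halves]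

lemma integral_cexp_neg_sqrt_two_pi_mul_mul_cpow {s u : ℂ} (hs : 0 < s.re)
    (hu : 0 < (exp ((π / 4 : ℝ) * I) * u).re) :
    ∫ w in Ioi (0 : ℝ), exp (-(√(2 * π) * (exp ((π / 4 : ℝ) * I) * u) * w)) * (w : ℂ) ^ (s - 1) =
      Gamma s * ((2 * π) ^ (s / 2) * exp (π * I * s / 4))⁻¹ * u ^ (-s) := by
  have hsqrt : 0 < √(2 * π) := Real.sqrt_pos.2 Real.two_pi_pos
  rw [integral_cexp_neg_mul_mul_cpow (by rw [re_ofReal_mul]; positivity) hs,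
    mul_cpow_of_re_pos (by rwa [ofReal_re]) hu, ofReal_sqrt_cpow Real.two_pi_pos,
    exp_mul_I_mul_cpow ⟨by linarith [Real.pi_pos], by linarith [Real.pi_pos]⟩ hu,
    show ((π / 4 : ℝ) : ℂ) * I * -s = -(π * I * s / 4) by push_cast; ring, exp_neg, neg_div,
    cpow_neg, ofReal_mul, ofReal_ofNat, mul_inv]
  ring

/-! ### Gaussian integrals along the line of slope one -/

lemma exp_pi_div_four_mul_I_sq : exp ((π / 4 : ℝ) * I) ^ 2 = I := by
  rw [← exp_nat_mul]
  convert exp_pi_div_two_mul_I using 2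
  push_cast
  ring

lemma exp_three_pi_div_four_mul_I :
    exp ((3 * π / 4 : ℝ) * I) = I * exp ((π / 4 : ℝ) * I) := by
  nth_rw 2 [← exp_pi_div_two_mul_I]
  rw [← exp_add]
  congr 1
  push_cast
  ring

lemma pi_mul_I_mul_slantLine_sq_add (c t : ℝ) (B : ℂ) :
    π * I * slantLine c (π / 4) t ^ 2 + B * slantLine c (π / 4) t =
      -π * t ^ 2 + exp ((π / 4 : ℝ) * I) * (2 * π * I * c + B) * t + (π * I * c ^ 2 + B * c) := by
  rw [slantLine]
  linear_combination π * I * t ^ 2 * exp_pi_div_four_mul_I_sq + π * t ^ 2 * I_sq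

lemma integrable_cexp_pi_mul_I_mul_slantLine_sq_add (c : ℝ) (B : ℂ) :
    Integrable fun t ↦
      exp (π * I * slantLine c (π / 4) t ^ 2 + B * slantLine c (π / 4) t) := by
  simp only [pi_mul_I_mul_slantLine_sq_add]
  exact integrable_cexp_quadratic' (by simpa using Real.pi_pos) _ _

lemma lineInt_cexp_pi_mul_I_mul_sq_add (c : ℝ) (B : ℂ) :
    lineInt c (π / 4) (fun u ↦ exp (π * I * u ^ 2 + B * u)) =
      exp ((π / 4 : ℝ) * I) * exp (I * B ^ 2 / (4 * π)) := by
  have hpi : (π : ℂ) ≠ 0 := ofReal_ne_zero.2 Real.pi_ne_zero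
  simp only [lineInt_eq_integral_slantLine_mul, pi_mul_I_mul_slantLine_sq_add]
  rw [integral_cexp_quadratic (by simpa using Real.pi_pos), neg_neg, div_self hpi, one_cpow,
    one_mul, mul_comm]
  congr 2
  rw [mul_pow, exp_pi_div_four_mul_I_sq]
  field_simp
  linear_combination 4 * π * c * (π * c * I + B) * I_sq

lemma im_slantLine_mul_exp_three_pi_div_four (c t : ℝ) :
    (slantLine c (π / 4) t * exp ((3 * π / 4 : ℝ) * I)).im = c * Real.sin (3 * π / 4) := by
  have h : slantLine c (π / 4) t * exp ((3 * π / 4 : ℝ) * I) =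
      c * exp ((3 * π / 4 : ℝ) * I) + ((-t : ℝ) : ℂ) := by
    rw [slantLine, exp_three_pi_div_four_mul_I, ofReal_neg]
    linear_combination I * t * exp_pi_div_four_mul_I_sq + t * I_sq
  rw [h, add_im, ofReal_im, add_zero, im_ofReal_mul, exp_ofReal_mul_I_im]

lemma re_exp_pi_div_four_mul_slantLine (c t : ℝ) :
    (exp ((π / 4 : ℝ) * I) * slantLine c (π / 4) t).re = c * Real.cos (π / 4) := by
  have h : exp ((π / 4 : ℝ) * I) * slantLine c (π / 4) t = c * exp ((π / 4 : ℝ) * I) + t * I := by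
    rw [slantLine]
    linear_combination t * exp_pi_div_four_mul_I_sq
  rw [h, add_re, re_ofReal_mul, re_ofReal_mul, exp_ofReal_mul_I_re, I_re, mul_zero, add_zero]

lemma lineInt_lineInt_integral_swap {α : Type*} [MeasurableSpace α] {μ : Measure α} [SFinite μ]
    {c c' θ θ' : ℝ} {F : ℂ → ℂ → α → ℂ}
    (hF : Integrable (fun p : ℝ × ℝ × α ↦ F (slantLine c θ p.1) (slantLine c' θ' p.2.1) p.2.2)
      (volume.prod (volume.prod μ))) :
    lineInt c θ (fun u ↦ lineInt c' θ' fun v ↦ ∫ w, F u v w ∂μ) =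
      lineInt c' θ' (fun v ↦ ∫ w, lineInt c θ (fun u ↦ F u v w) ∂μ) := by
  have swap : ∫ t, ∫ r, ∫ w, F (slantLine c θ t) (slantLine c' θ' r) w ∂μ =
      ∫ r, ∫ w, (∫ t, F (slantLine c θ t) (slantLine c' θ' r) w) ∂μ := by
    calc ∫ t, ∫ r, ∫ w, F (slantLine c θ t) (slantLine c' θ' r) w ∂μ
        = ∫ t, ∫ p : ℝ × α, F (slantLine c θ t) (slantLine c' θ' p.1) p.2 ∂(volume.prod μ) :=
          integral_congr_ae (hF.prod_right_ae.mono fun t ht ↦ (integral_prod _ ht).symm)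
      _ = ∫ p : ℝ × α, (∫ t, F (slantLine c θ t) (slantLine c' θ' p.1) p.2) ∂(volume.prod μ) :=
          integral_integral_swap hF
      _ = _ := integral_prod _ hF.integral_prod_right
  simp only [lineInt_eq_integral_slantLine_mul, integral_mul_const, swap]
  ring

/-! ### The triple integral -/

/-- The integrand of the triple integral behind the theorem: integrating out `v` and `w` leaves a
multiple of `e^{iπu²} u^{-s} / (e^{iπu} - e^{-iπu})`, while `u` can be integrated out as a
Gaussian. -/
noncomputable def siegelIntegrand (s u v : ℂ) (w : ℝ) : ℂ :=
  exp (π * I * u ^ 2 + π * I * u) * siegelKernel u v *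
    (exp (-(√(2 * π) * (exp ((π / 4 : ℝ) * I) * u) * w)) * (w : ℂ) ^ (s - 1))

-- On the two lines the cross terms of the exponent are purely imaginary: up to a unimodular factor
-- the integrand is a product of three functions of one variable.
lemma siegelIntegrand_slantLine (s : ℂ) (c c' t r w : ℝ) :
    siegelIntegrand s (slantLine c (π / 4) t) (slantLine c' (3 * π / 4) r) w =
      exp (2 * π * I * c * c') *
        (exp (π * I * slantLine c (π / 4) t ^ 2 +
            (π * I - 2 * π * I * c') * slantLine c (π / 4) t) *
          (siegelKernel c (slantLine c' (3 * π / 4) r) *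
            (exp (-(√(2 * π) * (exp ((π / 4 : ℝ) * I) * c) * w)) * (w : ℂ) ^ (s - 1)))) *
        exp ((2 * π * t * r - √(2 * π) * t * w : ℝ) * I) := by
  have hexp : π * I * slantLine c (π / 4) t ^ 2 + π * I * slantLine c (π / 4) t +
      -(2 * π * I * slantLine c (π / 4) t * slantLine c' (3 * π / 4) r) +
      -(√(2 * π) * (exp ((π / 4 : ℝ) * I) * slantLine c (π / 4) t) * w) =
      2 * π * I * c * c' + (π * I * slantLine c (π / 4) t ^ 2 +
        (π * I - 2 * π * I * c') * slantLine c (π / 4) t) +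
      -(2 * π * I * c * slantLine c' (3 * π / 4) r) +
      -(√(2 * π) * (exp ((π / 4 : ℝ) * I) * c) * w) +
      (2 * π * t * r - √(2 * π) * t * w : ℝ) * I := by
    simp only [slantLine, exp_three_pi_div_four_mul_I, ofReal_sub, ofReal_mul, ofReal_ofNat]
    linear_combination -(2 * π * t * r * I ^ 2 + √(2 * π) * t * w) * exp_pi_div_four_mul_I_sq -
      2 * π * t * r * I * I_sq
  have key := congr_arg exp hexp
  simp only [exp_add] at key
  simp only [siegelIntegrand, siegelKernel, exp_add]
  linear_combination
    (exp (-(2 * π * I * slantLine c' (3 * π / 4) r)) - 1)⁻¹ * (w : ℂ) ^ (s - 1) * key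

lemma sin_three_pi_div_four_pos : 0 < Real.sin (3 * π / 4) :=
  Real.sin_pos_of_pos_of_lt_pi (by positivity) (by linarith [Real.pi_pos])

lemma integrable_siegelIntegrand {s : ℂ} (hs : 0 < s.re) {c c' : ℝ} (hc : c ∈ Ioo 0 1)
    (hc' : c' ∈ Ioo 0 1) :
    Integrable (fun p : ℝ × ℝ × ℝ ↦
      siegelIntegrand s (slantLine c (π / 4) p.1) (slantLine c' (3 * π / 4) p.2.1) p.2.2)
      (volume.prod (volume.prod (volume.restrict (Ioi 0)))) := by
  have him : (c * exp ((3 * π / 4 : ℝ) * I)).im = c * Real.sin (3 * π / 4) := by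
    rw [im_ofReal_mul, exp_ofReal_mul_I_im]
  have hkernel : Integrable fun r ↦ siegelKernel c (slantLine c' (3 * π / 4) r) :=
    integrable_siegelKernel_slantLine (him ▸ mul_pos hc.1 sin_three_pi_div_four_pos)
      (him ▸ mul_lt_of_lt_one_left sin_three_pi_div_four_pos hc.2) (ne_intCast_of_mem_Ioo hc')
  have hgamma : IntegrableOn (fun w : ℝ ↦
      exp (-(√(2 * π) * (exp ((π / 4 : ℝ) * I) * c) * w)) * (w : ℂ) ^ (s - 1)) (Ioi 0) := by
    refine integrableOn_cexp_neg_mul_mul_cpow ?_ (by rw [sub_re, one_re]; linarith)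
    rw [re_ofReal_mul, re_mul_ofReal, exp_ofReal_mul_I_re, Real.cos_pi_div_four]
    have := hc.1
    positivity
  have hprod := ((integrable_cexp_pi_mul_I_mul_slantLine_sq_add c
    (π * I - 2 * π * I * c')).mul_prod (hkernel.mul_prod hgamma)).const_mul
      (exp (2 * π * I * c * c'))
  simp only [siegelIntegrand_slantLine]
  refine hprod.mul_bdd (c := 1) (Continuous.aestronglyMeasurable (by fun_prop)) ?_
  exact .of_forall fun p ↦ (norm_exp_ofReal_mul_I _).le

lemma lineInt_integral_siegelIntegrand_slantLine {s : ℂ} (hs : 0 < s.re) {c c' : ℝ}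
    (hc : c ∈ Ioo 0 1) (hc' : c' ∈ Ioo 0 1) (t : ℝ) :
    lineInt c' (3 * π / 4)
        (fun v ↦ ∫ w in Ioi 0, siegelIntegrand s (slantLine c (π / 4) t) v w) =
      Gamma s * ((2 * π) ^ (s / 2) * exp (π * I * s / 4))⁻¹ *
        (exp (π * I * slantLine c (π / 4) t ^ 2) * slantLine c (π / 4) t ^ (-s) /
          (exp (π * I * slantLine c (π / 4) t) - exp (-(π * I * slantLine c (π / 4) t)))) := by
  have hcos : 0 < Real.cos (π / 4) := by
    rw [Real.cos_pi_div_four]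
    positivity
  have him := im_slantLine_mul_exp_three_pi_div_four c t
  have hre := re_exp_pi_div_four_mul_slantLine c t
  generalize slantLine c (π / 4) t = u at him hre ⊢
  have hkernel := lineInt_siegelKernel (him ▸ mul_pos hc.1 sin_three_pi_div_four_pos)
    (him ▸ mul_lt_of_lt_one_left sin_three_pi_div_four_pos hc.2) hc'
  have hgamma := integral_cexp_neg_sqrt_two_pi_mul_mul_cpow hs (hre ▸ mul_pos hc.1 hcos)
  have hden : exp (2 * π * I * u) - 1 =
      exp (π * I * u) * (exp (π * I * u) - exp (-(π * I * u))) := by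
    rw [mul_sub, ← exp_add, ← exp_add, add_neg_cancel, exp_zero]
    ring_nf
  simp only [siegelIntegrand, integral_const_mul, hgamma, lineInt_const_mul, lineInt_mul_const,
    hkernel, hden, mul_inv, exp_add]
  field_simp

lemma lineInt_lineInt_integral_siegelIntegrand {s : ℂ} (hs : 0 < s.re) {c c' : ℝ}
    (hc : c ∈ Ioo 0 1) (hc' : c' ∈ Ioo 0 1) :
    lineInt c (π / 4)
        (fun u ↦ lineInt c' (3 * π / 4) fun v ↦ ∫ w in Ioi 0, siegelIntegrand s u v w) =
      Gamma s * ((2 * π) ^ (s / 2) * exp (π * I * s / 4))⁻¹ *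
        lineInt c (π / 4) (fun u ↦
          exp (π * I * u ^ 2) * u ^ (-s) / (exp (π * I * u) - exp (-(π * I * u)))) := by
  rw [← lineInt_const_mul]
  exact lineInt_congr (lineInt_integral_siegelIntegrand_slantLine hs hc hc')

lemma siegelIntegrand_eq_cexp_mul (s u v : ℂ) (w : ℝ) :
    siegelIntegrand s u v w =
      exp (π * I * u ^ 2 + (π * I - 2 * π * I * v - √(2 * π) * exp ((π / 4 : ℝ) * I) * w) * u) *
        ((exp (-(2 * π * I * v)) - 1)⁻¹ * (w : ℂ) ^ (s - 1)) := by
  have hexp : π * I * u ^ 2 + (π * I - 2 * π * I * v - √(2 * π) * exp ((π / 4 : ℝ) * I) * w) * u =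
      π * I * u ^ 2 + π * I * u + -(2 * π * I * u * v) +
        -(√(2 * π) * (exp ((π / 4 : ℝ) * I) * u) * w) := by ring
  rw [hexp, exp_add _ (-(√(2 * π) * _ * _)), exp_add _ (-(2 * π * I * u * v)), siegelIntegrand,
    siegelKernel]
  ring

lemma siegelIntegrand_gaussian_exponent (v : ℂ) (w : ℝ) :
    I * (π * I - 2 * π * I * v - √(2 * π) * exp ((π / 4 : ℝ) * I) * w) ^ 2 / (4 * π) =
      -(π * I * (v - 1 / 2) ^ 2) - √(2 * π) * exp ((π / 4 : ℝ) * I) * (v - 1 / 2) * w -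
        (w : ℂ) ^ 2 / 2 := by
  have hsqrt : (√(2 * π) : ℂ) ^ 2 = 2 * π := by
    exact_mod_cast congr_arg ofReal (Real.sq_sqrt Real.two_pi_pos.le)
  rw [div_eq_iff (by exact_mod_cast mul_ne_zero four_ne_zero Real.pi_ne_zero)]
  linear_combination
    (4 * π ^ 2 * (v - 1 / 2) ^ 2 * I +
      4 * π * (v - 1 / 2) * √(2 * π) * exp ((π / 4 : ℝ) * I) * w + 2 * π * w ^ 2) * I_sq +
    I * exp ((π / 4 : ℝ) * I) ^ 2 * w ^ 2 * hsqrt + 2 * π * I * w ^ 2 * exp_pi_div_four_mul_I_sq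

lemma lineInt_siegelIntegrand (s : ℂ) (c : ℝ) (v : ℂ) (w : ℝ) :
    lineInt c (π / 4) (fun u ↦ siegelIntegrand s u v w) =
      exp (π * I / 8) * (exp (-(π * I * v ^ 2 / 2) + π * I * v / 2) /
          (exp (-(2 * π * I * v)) - 1) * exp (-(π * I * (v - 1 / 2) ^ 2 / 2)) *
        (exp (-((w : ℂ) ^ 2 / 2) - √(2 * π) * exp (π * I / 4) * (v - 1 / 2) * w) *
          (w : ℂ) ^ (s - 1))) := by
  have hangle : ((π / 4 : ℝ) : ℂ) * I = π * I / 4 := by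
    push_cast
    ring
  have hexp : π * I / 4 + (-(π * I * (v - 1 / 2) ^ 2) -
        √(2 * π) * exp (π * I / 4) * (v - 1 / 2) * w - (w : ℂ) ^ 2 / 2) =
      π * I / 8 + (-(π * I * v ^ 2 / 2) + π * I * v / 2) + -(π * I * (v - 1 / 2) ^ 2 / 2) +
        (-((w : ℂ) ^ 2 / 2) - √(2 * π) * exp (π * I / 4) * (v - 1 / 2) * w) := by ring
  simp only [siegelIntegrand_eq_cexp_mul, lineInt_mul_const, lineInt_cexp_pi_mul_I_mul_sq_add,
    siegelIntegrand_gaussian_exponent]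
  rw [hangle, ← exp_add, hexp, exp_add, exp_add, exp_add (π * I / 8)]
  ring

theorem riemann_siegel_parabolic_cylinder_nw_general {s : ℂ} (hs : 0 < s.re) {c c' : ℝ}
    (hc : c ∈ Ioo 0 1) (hc' : c' ∈ Ioo 0 1) :
    lineInt c (π / 4) (fun u ↦
      exp (π * I * u ^ 2) * u ^ (-s) / (exp (π * I * u) - exp (-(π * I * u)))) =
    (2 * π) ^ (s / 2) * exp (π * I * s / 4 + π * I / 8) * (Gamma s)⁻¹ *
      lineInt c' (3 * π / 4) (fun u ↦
        exp (-(π * I * u ^ 2 / 2) + π * I * u / 2) / (exp (-(2 * π * I * u)) - 1) *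
          exp (-(π * I * (u - 1 / 2) ^ 2 / 2)) *
        ∫ w in Ioi (0 : ℝ),
          exp (-((w : ℂ) ^ 2 / 2) - √(2 * π) * exp (π * I / 4) * (u - 1 / 2) * w) *
            (w : ℂ) ^ (s - 1)) := by
  have hgamma : Gamma s ≠ 0 := Gamma_ne_zero_of_re_pos hs
  have hpow : (2 * π : ℂ) ^ (s / 2) ≠ 0 :=
    cpow_ne_zero_iff.2 (Or.inl (by exact_mod_cast Real.two_pi_pos.ne'))
  have key := lineInt_lineInt_integral_swap (integrable_siegelIntegrand hs hc hc')
  rw [lineInt_lineInt_integral_siegelIntegrand hs hc hc'] at key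
  simp only [lineInt_siegelIntegrand, integral_const_mul, lineInt_const_mul] at key
  have hconst : Gamma s * ((2 * π) ^ (s / 2) * exp (π * I * s / 4))⁻¹ ≠ 0 :=
    mul_ne_zero hgamma (inv_ne_zero (mul_ne_zero hpow (exp_ne_zero _)))
  refine mul_left_cancel₀ hconst (key.trans ?_)
  rw [← mul_assoc (Gamma s * _), exp_add]
  congr 1
  field_simp

/-- Transformation of `∫_{0↗1} e^{iπu²} u^{-s}/(e^{iπu} - e^{-iπu}) du` into an
integral over the line `0 ↖ 1`; the factor `e^{-iπ(u-1/2)²/2}` times the inner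
integral divided by `Γ(s)` is `U(s - 1/2, √(2π) e^{iπ/4} (u - 1/2))`. -/
theorem riemann_siegel_parabolic_cylinder_nw (s : ℂ) (hs : 1 < s.re)
    (c c' : ℝ) (hc : 0 < c) (hc' : c < 1) (hc₁ : 0 < c') (hc₂ : c' < 1) :
    lineInt c (π/4) (fun u =>
      Complex.exp ((π : ℂ) * Complex.I * u ^ 2) * u ^ (-s) /
        (Complex.exp ((π : ℂ) * Complex.I * u) - Complex.exp (-((π : ℂ) * Complex.I * u)))) =
    (2 * (π : ℂ)) ^ (s / 2) *
      Complex.exp ((π : ℂ) * Complex.I * s / 4 + (π : ℂ) * Complex.I / 8) *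
      (Complex.Gamma s)⁻¹ *
      lineInt c' (3 * π / 4) (fun u =>
        Complex.exp (-((π : ℂ) * Complex.I * u ^ 2 / 2) + (π : ℂ) * Complex.I * u / 2) /
          (Complex.exp (-(2 * (π : ℂ) * Complex.I * u)) - 1) *
        Complex.exp (-((π : ℂ) * Complex.I * (u - 1 / 2) ^ 2 / 2)) *
        ∫ w in Set.Ioi (0 : ℝ),
          Complex.exp (-((w : ℂ) ^ 2 / 2) -
              (Real.sqrt (2 * π) : ℂ) * Complex.exp ((π : ℂ) * Complex.I / 4) *
                (u - 1 / 2) * (w : ℂ)) *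
            (w : ℂ) ^ (s - 1)) :=
  riemann_siegel_parabolic_cylinder_nw_general (one_pos.trans hs) ⟨hc, hc'⟩ ⟨hc₁, hc₂⟩
end

section
/- Let s be a complex number with Re(s) < 1. Then ∫_{0 ↘ 1} (e^{-iπu²}·u^{s-1}/(e^{iπu} - e^{-iπu})) du = (2π)^{(1-s)/2}·e^{-iπ(2-s)/4}·(1/Γ(1-s))·∫_{-1/2 ↙ 1/2} (e^{iπu²}/(e^{2πiu} + 1))·(∫_0^∞ e^{-w²/2 - √(2π)·e^{-iπ/4}·u·w}·w^{-s} dw) du. (The inner integral over w equals Γ(1-s)·e^{-iπu²/2}·U(1/2-s, √(2π)e^{-iπ/4}u), where U is the parabolic cylinder function; this is the complex conjugate form of the representation of F(s), giving the stated representation of conj(F(1 - conj(s))).) -/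
open scoped Real
open MeasureTheory Set Complex

/-!
Writing `u^{s-1}` as a Gamma integral in the variable `x = √(2π) e^{-iπ/4} w` and exchanging the
integrals reduces the left-hand side to the Mordell integral
`Φ(x) = ∫_{0↘1} e^{-iπu² - xu} / (e^{iπu} - e^{-iπu}) du`. Shifting the contour by `1` across the
pole at `u = 1`, and evaluating the Gaussian integral `Φ(x) - Φ(x + 2πi)`, yields
`(eˣ - 1) Φ(x) = 1 - e^{-ix²/4π + x/2}`. By the reflection `u ↦ 1/2 - conj u`, the integral
`Ψ(x) = ∫_{-1/2↙1/2} e^{iπu² - xu} / (e^{2πiu} + 1) du` is expressed through `conj Φ(-conj x)`, and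
the two closed forms agree up to a Gaussian factor: `Φ(x) = e^{-iπ/4} e^{-ix²/4π} Ψ(x)`. Since
`ix²/4π = w²/2` is real and positive, this factor provides the decay in `w` needed to exchange the
integrals back.
-/

namespace RiemannSiegel

open Filter Topology ComplexConjugate

section LaplaceTransform

lemma integrableOn_rpow_mul_exp_neg_mul {σ b : ℝ} (hσ : -1 < σ) (hb : 0 < b) :
    IntegrableOn (fun w : ℝ ↦ w ^ σ * Real.exp (-(b * w))) (Ioi 0) := by
  simpa using integrableOn_rpow_mul_exp_neg_mul_rpow hσ one_pos hb

lemma aestronglyMeasurable_ofReal_cpow (a : ℂ) :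
    AEStronglyMeasurable (fun w : ℝ ↦ (w : ℂ) ^ a) (volume.restrict (Ioi 0)) :=
  ContinuousOn.aestronglyMeasurable (fun w hw ↦
    (continuousAt_ofReal_cpow_const w a (Or.inr (ne_of_gt hw))).continuousWithinAt)
    measurableSet_Ioi

lemma norm_cpow_mul_exp_neg_mul (a r : ℂ) {w : ℝ} (hw : 0 < w) :
    ‖(w : ℂ) ^ a * cexp (-(r * w))‖ = w ^ a.re * Real.exp (-(r.re * w)) := by
  simp [norm_cpow_eq_rpow_re_of_pos hw, Complex.norm_exp]

lemma integrableOn_cpow_mul_exp_neg_mul {a r : ℂ} (ha : -1 < a.re) (hr : 0 < r.re) :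
    IntegrableOn (fun w : ℝ ↦ (w : ℂ) ^ a * cexp (-(r * w))) (Ioi 0) := by
  refine Integrable.mono' (integrableOn_rpow_mul_exp_neg_mul ha hr)
    ((aestronglyMeasurable_ofReal_cpow a).mul (by fun_prop)) ?_
  filter_upwards [ae_restrict_mem measurableSet_Ioi] with w hw
  exact (norm_cpow_mul_exp_neg_mul a r hw).le

lemma differentiableAt_integral_cpow_mul_exp_neg_mul {a r₀ : ℂ} (ha : -1 < a.re)
    (hr₀ : 0 < r₀.re) :
    DifferentiableAt ℂ (fun r ↦ ∫ w : ℝ in Ioi 0, (w : ℂ) ^ a * cexp (-(r * w))) r₀ := by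
  have hderiv (r : ℂ) (w : ℝ) :
      HasDerivAt (fun r ↦ (w : ℂ) ^ a * cexp (-(r * w)))
        ((w : ℂ) ^ a * cexp (-(r * w)) * -w) r := by
    simpa [mul_assoc] using
      (((hasDerivAt_id r).mul_const (w : ℂ)).fun_neg.cexp).const_mul ((w : ℂ) ^ a)
  have hbound (w : ℝ) (hw : 0 < w) (r : ℂ) (hr : r ∈ Metric.ball r₀ (r₀.re / 2)) :
      ‖(w : ℂ) ^ a * cexp (-(r * w)) * -w‖ ≤
        w ^ (a.re + 1) * Real.exp (-(r₀.re / 2 * w)) := by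
    have hre : r₀.re / 2 ≤ r.re := by
      have := (abs_le.1 ((abs_re_le_norm (r - r₀)).trans (mem_ball_iff_norm.1 hr).le)).1
      rw [sub_re] at this
      linarith
    rw [norm_mul, norm_cpow_mul_exp_neg_mul a r hw, norm_neg, norm_real,
      Real.norm_of_nonneg hw.le, Real.rpow_add_one hw.ne', mul_right_comm]
    gcongr
  refine (hasDerivAt_integral_of_dominated_loc_of_deriv_le
    (F := fun r w ↦ (w : ℂ) ^ a * cexp (-(r * w)))
    (F' := fun r w ↦ (w : ℂ) ^ a * cexp (-(r * w)) * -w)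
    (bound := fun w ↦ w ^ (a.re + 1) * Real.exp (-(r₀.re / 2 * w)))
    (Metric.ball_mem_nhds r₀ (half_pos hr₀))
    (.of_forall fun r ↦ (aestronglyMeasurable_ofReal_cpow a).mul (by fun_prop))
    (integrableOn_cpow_mul_exp_neg_mul ha hr₀)
    (((aestronglyMeasurable_ofReal_cpow a).mul (by fun_prop)).mul (by fun_prop)) ?_
    (integrableOn_rpow_mul_exp_neg_mul (by linarith) (half_pos hr₀))
    (.of_forall fun w r _ ↦ hderiv r w)).2.differentiableAt
  filter_upwards [ae_restrict_mem measurableSet_Ioi] with w hw using hbound w hw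

/-- Both sides are holomorphic in `r` on the right half-plane and agree for real `r`. -/
lemma integral_cpow_mul_exp_neg_mul_Ioi_of_re_pos {a r : ℂ} (ha : 0 < a.re) (hr : 0 < r.re) :
    ∫ w : ℝ in Ioi 0, (w : ℂ) ^ (a - 1) * cexp (-(r * w)) = r ^ (-a) * Gamma a := by
  have hopen : IsOpen {z : ℂ | 0 < z.re} := isOpen_lt continuous_const continuous_re
  have hleft : DifferentiableOn ℂ
      (fun r ↦ ∫ w : ℝ in Ioi 0, (w : ℂ) ^ (a - 1) * cexp (-(r * w))) {z | 0 < z.re} :=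
    fun z hz ↦ (differentiableAt_integral_cpow_mul_exp_neg_mul
      (by simpa using ha) hz).differentiableWithinAt
  have hright : DifferentiableOn ℂ (fun r ↦ r ^ (-a) * Gamma a) {z | 0 < z.re} := fun z hz ↦
    ((differentiableAt_id.cpow_const (Or.inl hz)).mul_const _).differentiableWithinAt
  have hreal (x : ℝ) (hx : 0 < x) :
      ∫ w : ℝ in Ioi 0, (w : ℂ) ^ (a - 1) * cexp (-(x * w)) = (x : ℂ) ^ (-a) * Gamma a := by
    rw [integral_cpow_mul_exp_neg_mul_Ioi ha hx, one_div, inv_cpow _ _ (by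
      rw [arg_ofReal_of_nonneg hx.le]; exact Real.pi_pos.ne), cpow_neg]
  have hlim : Tendsto ((↑) : ℝ → ℂ) (𝓝[≠] 1) (𝓝[≠] 1) := by
    simpa using (continuous_ofReal.continuousWithinAt (s := {1}ᶜ) (x := (1 : ℝ))).tendsto_nhdsWithin
      (t := {1}ᶜ) fun x hx ↦ by simpa using hx
  have hfreq : ∃ᶠ x : ℝ in 𝓝[≠] 1, ∫ w : ℝ in Ioi 0, (w : ℂ) ^ (a - 1) * cexp (-(x * w)) =
      (x : ℂ) ^ (-a) * Gamma a :=
    ((eventually_nhdsWithin_of_eventually_nhds (lt_mem_nhds one_pos)).mono hreal).frequently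
  exact (hleft.analyticOnNhd hopen).eqOn_of_preconnected_of_frequently_eq
    (hright.analyticOnNhd hopen) (convex_halfSpace_re_gt 0).isPreconnected (z₀ := 1)
    (by simp) (hlim.frequently hfreq) hr

end LaplaceTransform

section LineIntegral

/-- The point with complex parameter `z` on the complexified line of `lineInt c θ`; a fixed
imaginary part of `z` gives a parallel line. -/
noncomputable def linePoint (c θ : ℝ) (z : ℂ) : ℂ := c + cexp (θ * I) * z

lemma lineInt_eq (c θ : ℝ) (f : ℂ → ℂ) :
    lineInt c θ f = ∫ t : ℝ, f (linePoint c θ t) * cexp (θ * I) := rfl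

lemma linePoint_re (c θ : ℝ) (z : ℂ) :
    (linePoint c θ z).re = c + (Real.cos θ * z.re - Real.sin θ * z.im) := by
  simp [linePoint, exp_ofReal_mul_I_re, exp_ofReal_mul_I_im]

lemma linePoint_im (c θ : ℝ) (z : ℂ) :
    (linePoint c θ z).im = Real.cos θ * z.im + Real.sin θ * z.re := by
  simp [linePoint, exp_ofReal_mul_I_re, exp_ofReal_mul_I_im]

@[fun_prop]
lemma differentiable_linePoint (c θ : ℝ) : Differentiable ℂ (linePoint c θ) := by
  unfold linePoint; fun_prop

@[fun_prop]
lemma continuous_linePoint (c θ : ℝ) : Continuous (linePoint c θ) :=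
  (differentiable_linePoint c θ).continuous

lemma linePoint_add (c d θ : ℝ) (z : ℂ) : linePoint (c + d) θ z = linePoint c θ z + d := by
  simp only [linePoint, ofReal_add]
  ring

lemma linePoint_add_mul_I (c d θ t : ℝ) :
    linePoint c θ (t + (-(d * Real.sin θ) : ℝ) * I) =
      linePoint (c + d) θ (t - d * Real.cos θ : ℝ) := by
  apply Complex.ext <;>
    simp only [linePoint_re, linePoint_im, add_re, add_im, ofReal_re, ofReal_im, re_ofReal_mul,
      im_ofReal_mul, I_re, I_im]
  · linear_combination d * Real.sin_sq_add_cos_sq θ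
  · ring

lemma linePoint_sub_conj (a c θ t : ℝ) :
    linePoint (a - c) (-π - θ) t = a - conj (linePoint c θ t) := by
  have hsin : Real.sin (-π - θ) = Real.sin θ := by
    rw [← Real.sin_add_two_pi, ← Real.sin_pi_sub θ]; ring_nf
  have hcos : Real.cos (-π - θ) = -Real.cos θ := by
    rw [← Real.cos_add_two_pi, ← Real.cos_pi_sub θ]; ring_nf
  apply Complex.ext
  · simp only [linePoint_re, hcos, hsin, ofReal_re, ofReal_im, mul_zero, sub_zero, sub_re, conj_re]
    ring
  · simp [linePoint_im, hcos, hsin]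

lemma lineInt_const_mul (c θ : ℝ) (a : ℂ) (f : ℂ → ℂ) :
    lineInt c θ (fun u ↦ a * f u) = a * lineInt c θ f := by
  simp only [lineInt_eq, mul_assoc, integral_const_mul]

lemma lineInt_congr {c θ : ℝ} {f g : ℂ → ℂ}
    (h : ∀ t : ℝ, f (linePoint c θ t) = g (linePoint c θ t)) : lineInt c θ f = lineInt c θ g := by
  simp only [lineInt_eq, h]

lemma lineInt_sub {c θ : ℝ} {f g : ℂ → ℂ} (hf : Integrable fun t : ℝ ↦ f (linePoint c θ t))
    (hg : Integrable fun t : ℝ ↦ g (linePoint c θ t)) :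
    lineInt c θ (fun u ↦ f u - g u) = lineInt c θ f - lineInt c θ g := by
  simp only [lineInt_eq, sub_mul]
  exact integral_sub (hf.mul_const _) (hg.mul_const _)

lemma lineInt_add (c d θ : ℝ) (f : ℂ → ℂ) :
    lineInt (c + d) θ f = lineInt c θ fun u ↦ f (u + d) := by
  simp only [lineInt_eq, linePoint_add]

lemma lineInt_sub_conj (a c θ : ℝ) (f : ℂ → ℂ) :
    lineInt (a - c) (-π - θ) f = -conj (lineInt c θ fun u ↦ conj (f (a - conj u))) := by
  have hdir : cexp ((-π - θ : ℝ) * I) = -conj (cexp (θ * I)) := by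
    rw [show ((-π - θ : ℝ) : ℂ) * I = -(π * I) + -(θ * I) by push_cast; ring, Complex.exp_add,
      Complex.exp_neg (π * I), exp_pi_mul_I, ← exp_conj]
    simp
  simp only [lineInt_eq, linePoint_sub_conj, hdir, ← integral_conj, map_mul, conj_conj,
    ← integral_neg, mul_neg]

lemma lineInt_setIntegral_Ioi_swap {a : ℂ} (ha : -1 < a.re) {c θ : ℝ} {K : ℝ → ℂ → ℂ}
    (hK : Continuous fun p : ℝ × ℝ ↦ K p.2 (linePoint c θ p.1)) {g : ℝ → ℝ} (hg : Integrable g)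
    {b : ℝ} (hb : 0 < b)
    (hbound : ∀ t w : ℝ, 0 < w → ‖K w (linePoint c θ t)‖ ≤ g t * Real.exp (-(b * w))) :
    lineInt c θ (fun u ↦ ∫ w : ℝ in Ioi 0, (w : ℂ) ^ a * K w u) =
      ∫ w : ℝ in Ioi 0, (w : ℂ) ^ a * lineInt c θ (K w) := by
  simp only [lineInt_eq, integral_mul_const, ← mul_assoc, ← integral_const_mul]
  congr 1
  refine integral_integral_swap (Integrable.mono'
    (hg.mul_prod (integrableOn_rpow_mul_exp_neg_mul ha hb))
    ((aestronglyMeasurable_ofReal_cpow a).comp_snd.mul hK.aestronglyMeasurable) ?_)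
  have hpos : ∀ᵐ p : ℝ × ℝ ∂(volume.prod (volume.restrict (Ioi 0))), p.2 ∈ Ioi 0 :=
    Measure.quasiMeasurePreserving_snd.ae (ae_restrict_mem measurableSet_Ioi)
  filter_upwards [hpos] with p hp
  calc ‖(p.2 : ℂ) ^ a * K p.2 (linePoint c θ p.1)‖
      = p.2 ^ a.re * ‖K p.2 (linePoint c θ p.1)‖ := by
        rw [norm_mul, norm_cpow_eq_rpow_re_of_pos hp]
    _ ≤ p.2 ^ a.re * (g p.1 * Real.exp (-(b * p.2))) := by
        have := Real.rpow_nonneg (le_of_lt hp) a.re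
        gcongr
        exact hbound p.1 p.2 hp
    _ = g p.1 * (p.2 ^ a.re * Real.exp (-(b * p.2))) := mul_left_comm _ _ _

end LineIntegral

section ContourShift

lemma tendsto_intervalIntegral_vertical {f : ℂ → ℂ} {h : ℝ} {φ : ℝ → ℝ}
    (hφ : Tendsto φ atTop (𝓝 0))
    (hf : ∀ᶠ T in atTop, ∀ z : ℂ, |z.re| = T → z.im ∈ uIcc 0 h → ‖f z‖ ≤ φ T)
    {σ : ℝ} (hσ : |σ| = 1) :
    Tendsto (fun T : ℝ ↦ ∫ y in (0 : ℝ)..h, f ((σ * T : ℝ) + y * I)) atTop (𝓝 0) := by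
  refine squeeze_zero_norm' (a := fun T ↦ φ T * |h - 0|) ?_ (by simpa using hφ.mul_const |h - 0|)
  filter_upwards [hf, eventually_ge_atTop 0] with T hT hT₀
  refine intervalIntegral.norm_integral_le_of_norm_le_const fun y hy ↦ hT _ ?_ ?_
  · simp [abs_mul, hσ, abs_of_nonneg hT₀]
  · simpa using uIoc_subset_uIcc hy

/-- Cauchy's theorem on the rectangles `[-T, T] × [0, h]` as `T → ∞`. -/
lemma integral_eq_integral_add_mul_I {f : ℂ → ℂ} {h : ℝ} {φ : ℝ → ℝ}
    (hd : ∀ z : ℂ, z.im ∈ uIcc 0 h → DifferentiableAt ℂ f z)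
    (h₀ : Integrable fun t : ℝ ↦ f t) (h₁ : Integrable fun t : ℝ ↦ f (t + h * I))
    (hφ : Tendsto φ atTop (𝓝 0))
    (hf : ∀ᶠ T in atTop, ∀ z : ℂ, |z.re| = T → z.im ∈ uIcc 0 h → ‖f z‖ ≤ φ T) :
    ∫ t : ℝ, f t = ∫ t : ℝ, f (t + h * I) := by
  have hrect (T : ℝ) :
      (∫ t in -T..T, f t) - (∫ t in -T..T, f (t + h * I)) +
        I • (∫ y in (0 : ℝ)..h, f ((1 * T : ℝ) + y * I)) -
        I • (∫ y in (0 : ℝ)..h, f ((-1 * T : ℝ) + y * I)) = 0 := by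
    simpa using integral_boundary_rect_eq_zero_of_differentiableOn f ⟨-T, 0⟩ ⟨T, h⟩
      fun z hz ↦ (hd z hz.2).differentiableWithinAt
  have hbot := intervalIntegral_tendsto_integral h₀ tendsto_neg_atTop_atBot tendsto_id
  have htop := intervalIntegral_tendsto_integral h₁ tendsto_neg_atTop_atBot tendsto_id
  have hright := (tendsto_intervalIntegral_vertical hφ hf (σ := 1) (by simp)).const_smul I
  have hleft := (tendsto_intervalIntegral_vertical hφ hf (σ := -1) (by simp)).const_smul I
  have hlim := tendsto_nhds_unique (((hbot.sub htop).add hright).sub hleft)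
    ((tendsto_const_nhds (x := (0 : ℂ))).congr fun T ↦ (hrect T).symm)
  simpa [sub_eq_zero] using hlim

lemma lineInt_add_eq_of_differentiableAt {f : ℂ → ℂ} {c d θ : ℝ} {φ : ℝ → ℝ}
    (hd : ∀ z : ℂ, z.im ∈ uIcc 0 (-(d * Real.sin θ)) → DifferentiableAt ℂ f (linePoint c θ z))
    (h₀ : Integrable fun t : ℝ ↦ f (linePoint c θ t))
    (h₁ : Integrable fun t : ℝ ↦ f (linePoint (c + d) θ t)) (hφ : Tendsto φ atTop (𝓝 0))
    (hf : ∀ᶠ T in atTop, ∀ z : ℂ, |z.re| = T → z.im ∈ uIcc 0 (-(d * Real.sin θ)) →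
      ‖f (linePoint c θ z)‖ ≤ φ T) :
    lineInt (c + d) θ f = lineInt c θ f := by
  have hshift := integral_eq_integral_add_mul_I (f := fun z ↦ f (linePoint c θ z))
    (fun z hz ↦ DifferentiableAt.fun_comp' z (hd z hz) (differentiable_linePoint c θ z)) h₀
    (by simpa only [linePoint_add_mul_I] using h₁.comp_sub_right (d * Real.cos θ)) hφ hf
  simp only [linePoint_add_mul_I] at hshift
  rw [integral_sub_right_eq_self (fun t : ℝ ↦ f (linePoint (c + d) θ t))] at hshift
  simp only [lineInt_eq, integral_mul_const, hshift]

end ContourShift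

section SinDenom

/-- The denominator `e^{iπu} - e^{-iπu}` of the Mordell integrand, with simple zeros exactly at the
integers. -/
noncomputable def sinDenom (u : ℂ) : ℂ := cexp (π * I * u) - cexp (-(π * I * u))

lemma sinDenom_eq_sin (u : ℂ) : sinDenom u = 2 * I * sin (π * u) := by
  rw [sinDenom, Complex.sin, mul_right_comm, neg_mul]
  linear_combination (cexp (π * u * I) - cexp (-(π * u * I))) * I_sq

@[fun_prop]
lemma differentiable_sinDenom : Differentiable ℂ sinDenom := by unfold sinDenom; fun_prop

@[fun_prop]
lemma continuous_sinDenom : Continuous sinDenom := differentiable_sinDenom.continuous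

lemma sinDenom_eq_zero_iff {u : ℂ} : sinDenom u = 0 ↔ ∃ n : ℤ, u = n := by
  have hpi : (π : ℂ) ≠ 0 := ofReal_ne_zero.2 Real.pi_ne_zero
  simp [sinDenom_eq_sin, Complex.sin_eq_zero_iff, mul_comm (π : ℂ), hpi]

lemma sinDenom_one : sinDenom 1 = 0 := sinDenom_eq_zero_iff.2 ⟨1, by simp⟩

lemma sinDenom_add_one (u : ℂ) : sinDenom (u + 1) = -sinDenom u := by
  simp [sinDenom_eq_sin, mul_add, Complex.sin_add_pi]

lemma sinDenom_neg (u : ℂ) : sinDenom (-u) = -sinDenom u := by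
  simp [sinDenom_eq_sin]

lemma exp_mul_sinDenom (u : ℂ) : cexp (π * I * u) * sinDenom u = cexp (2 * π * I * u) - 1 := by
  rw [sinDenom, mul_sub, ← Complex.exp_add, ← Complex.exp_add, add_neg_cancel, exp_zero]
  ring_nf

lemma sinDenom_conj (u : ℂ) : sinDenom (conj u) = -conj (sinDenom u) := by
  simp [sinDenom_eq_sin, ← Complex.sin_conj, map_ofNat]

lemma deriv_sinDenom_one_ne_zero : deriv sinDenom 1 ≠ 0 := by
  have hlin : HasDerivAt (fun u : ℂ ↦ (π : ℂ) * u) π 1 := by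
    simpa using (hasDerivAt_id (1 : ℂ)).const_mul (π : ℂ)
  have hderiv : HasDerivAt sinDenom (2 * I * (Complex.cos (π * 1) * π)) 1 :=
    (hlin.csin.const_mul (2 * I)).congr_of_eventuallyEq (.of_forall sinDenom_eq_sin)
  simp [hderiv.deriv, Real.pi_ne_zero]

lemma sq_pi_mul_im_div_two_le_norm_sinDenom (u : ℂ) : (π * u.im) ^ 2 / 2 ≤ ‖sinDenom u‖ := by
  have hexp (y : ℝ) (hy : 0 ≤ y) : y ^ 2 / 2 ≤ Real.exp y - Real.exp (-y) := by
    have := Real.quadratic_le_exp_of_nonneg hy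
    have := Real.exp_le_one_iff.2 (neg_nonpos.2 hy)
    linarith
  have hnorm (v : ℂ) : ‖cexp (π * I * v)‖ = Real.exp (-(π * v.im)) := by
    simp [Complex.norm_exp]
  have hnorm_neg : ‖cexp (-(π * I * u))‖ = Real.exp (π * u.im) := by
    simpa using hnorm (-u)
  rcases le_total 0 u.im with him | him
  · calc (π * u.im) ^ 2 / 2
        ≤ Real.exp (π * u.im) - Real.exp (-(π * u.im)) := hexp _ (by positivity)
      _ ≤ ‖sinDenom u‖ := by
        rw [← hnorm, ← hnorm_neg, sinDenom, norm_sub_rev]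
        exact norm_sub_norm_le _ _
  · calc (π * u.im) ^ 2 / 2 = (-(π * u.im)) ^ 2 / 2 := by rw [neg_sq]
      _ ≤ Real.exp (-(π * u.im)) - Real.exp (- -(π * u.im)) :=
        hexp _ (by nlinarith [Real.pi_pos])
      _ ≤ ‖sinDenom u‖ := by
        rw [neg_neg, ← hnorm, ← hnorm_neg, sinDenom]
        exact norm_sub_norm_le _ _

lemma one_le_norm_sinDenom {u : ℂ} (hu : 1 ≤ |u.im|) : 1 ≤ ‖sinDenom u‖ := by
  refine le_trans ?_ (sq_pi_mul_im_div_two_le_norm_sinDenom u)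
  rw [mul_pow, ← sq_abs u.im]
  nlinarith [Real.pi_gt_three, mul_le_mul hu hu zero_le_one (abs_nonneg u.im)]

variable {c θ : ℝ}

lemma ne_intCast_of_pos_of_lt_one (hc₀ : 0 < c) (hc₁ : c < 1) (n : ℤ) : c ≠ n := by
  rintro rfl
  have : 0 < n := by exact_mod_cast hc₀
  have : n < 1 := by exact_mod_cast hc₁
  omega

lemma add_one_ne_intCast (hc : ∀ n : ℤ, c ≠ n) (n : ℤ) : c + 1 ≠ n := fun h ↦
  hc (n - 1) (by push_cast; linarith)

lemma sinDenom_linePoint_ne_zero (hθ : Real.sin θ ≠ 0) (hc : ∀ n : ℤ, c ≠ n) (t : ℝ) :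
    sinDenom (linePoint c θ t) ≠ 0 := by
  intro hzero
  obtain ⟨n, hn⟩ := sinDenom_eq_zero_iff.1 hzero
  have him := congrArg im hn
  have hre := congrArg re hn
  obtain rfl : t = 0 := by simpa [linePoint_im, hθ] using him
  exact hc n (by simpa [linePoint_re] using hre)

lemma continuous_inv_sinDenom_linePoint (hθ : Real.sin θ ≠ 0) (hc : ∀ n : ℤ, c ≠ n) :
    Continuous fun t : ℝ ↦ (sinDenom (linePoint c θ t))⁻¹ :=
  Continuous.inv₀ (by fun_prop) (sinDenom_linePoint_ne_zero hθ hc)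

lemma isBigO_inv_sinDenom_linePoint (c : ℝ) (hθ : Real.sin θ ≠ 0) :
    (fun t : ℝ ↦ (sinDenom (linePoint c θ t))⁻¹) =O[cocompact ℝ] fun t ↦ (1 + t ^ 2)⁻¹ := by
  have hk : 0 < (π * Real.sin θ) ^ 2 / 4 := by positivity
  refine .of_bound ((π * Real.sin θ) ^ 2 / 4)⁻¹ ?_
  filter_upwards [(tendsto_norm_cocompact_atTop (E := ℝ)).eventually_ge_atTop 1] with t ht
  have ht_sq : 1 ≤ t ^ 2 := (one_le_sq_iff_one_le_abs t).2 ht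
  have hlower : (π * Real.sin θ) ^ 2 / 4 * (1 + t ^ 2) ≤ ‖sinDenom (linePoint c θ t)‖ := by
    refine le_trans ?_ (sq_pi_mul_im_div_two_le_norm_sinDenom _)
    simp only [linePoint_im, ofReal_im, ofReal_re, mul_zero, zero_add]
    nlinarith
  rw [norm_inv, Real.norm_of_nonneg (by positivity), ← mul_inv]
  exact inv_anti₀ (mul_pos hk (by positivity)) hlower

lemma integrable_inv_sinDenom_linePoint (hθ : Real.sin θ ≠ 0) (hc : ∀ n : ℤ, c ≠ n) :
    Integrable fun t : ℝ ↦ (sinDenom (linePoint c θ t))⁻¹ :=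
  (continuous_inv_sinDenom_linePoint hθ hc).locallyIntegrable.integrable_of_isBigO_cocompact
    (isBigO_inv_sinDenom_linePoint c hθ) (integrable_inv_one_add_sq.integrableAtFilter _)

end SinDenom

section MordellIntegral

/-- The unit vector `e^{-iπ/4}`, in the shape in which `lineInt` produces it. -/
noncomputable def dir : ℂ := cexp ((-(π / 4) : ℝ) * I)

lemma dir_eq : dir = cexp (-(π * I / 4)) := by
  rw [dir]
  push_cast
  ring_nf

lemma dir_eq_sqrt : dir = (√2 / 2 : ℝ) - (√2 / 2 : ℝ) * I := by
  rw [dir, exp_mul_I, ← ofReal_cos, ← ofReal_sin, Real.cos_neg, Real.sin_neg,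
    Real.cos_pi_div_four, Real.sin_pi_div_four]
  push_cast
  ring

lemma dir_re : dir.re = √2 / 2 := by simp [dir_eq_sqrt]

lemma dir_sq : dir ^ 2 = -I := by
  rw [dir_eq, ← Complex.exp_nat_mul, ← exp_neg_pi_div_two_mul_I]
  push_cast
  ring_nf

lemma dir_mul_exp : dir * cexp (π * I / 4) = 1 := by
  rw [dir_eq, ← Complex.exp_add]
  simp

lemma linePoint_neg_pi_div_four (c : ℝ) (z : ℂ) : linePoint c (-(π / 4)) z = c + dir * z := rfl

lemma sin_neg_pi_div_four : Real.sin (-(π / 4)) = -(√2 / 2) := by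
  rw [Real.sin_neg, Real.sin_pi_div_four]

lemma sin_neg_pi_div_four_ne_zero : Real.sin (-(π / 4)) ≠ 0 := by
  rw [sin_neg_pi_div_four]
  exact neg_ne_zero.2 (by positivity)

/-- The integrand of `mordellIntegral`. -/
noncomputable def mordellKernel (x u : ℂ) : ℂ := cexp (-(π * I * u ^ 2) - u * x) / sinDenom u

/-- The Mordell integral `∫ e^{-iπu² - xu} / (e^{iπu} - e^{-iπu}) du` along the line of slope `-1`
through `c`, traversed from the upper left to the lower right. -/
noncomputable def mordellIntegral (c : ℝ) (x : ℂ) : ℂ := lineInt c (-(π / 4)) (mordellKernel x)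

lemma mordell_exponent_linePoint (c : ℝ) (x z : ℂ) :
    -(π * I * linePoint c (-(π / 4)) z ^ 2) - linePoint c (-(π / 4)) z * x =
      -π * z ^ 2 + -(dir * (2 * π * I * c + x)) * z + (-(π * I * c ^ 2) - c * x) := by
  rw [linePoint_neg_pi_div_four]
  linear_combination -(π : ℂ) * I * z ^ 2 * dir_sq + π * z ^ 2 * I_sq

lemma integrable_cexp_mordell_exponent (c : ℝ) (x : ℂ) : Integrable fun t : ℝ ↦
    cexp (-(π * I * linePoint c (-(π / 4)) t ^ 2) - linePoint c (-(π / 4)) t * x) := by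
  simp only [mordell_exponent_linePoint]
  exact integrable_cexp_quadratic' (by simpa using Real.pi_pos) _ _

lemma lineInt_cexp_mordell_exponent (c : ℝ) (x : ℂ) :
    lineInt c (-(π / 4)) (fun u ↦ cexp (-(π * I * u ^ 2) - u * x)) =
      cexp (-(I * x ^ 2 / (4 * π)) - π * I / 4) := by
  have hpi : (π : ℂ) ≠ 0 := ofReal_ne_zero.2 Real.pi_ne_zero
  have hexponent : -(π * I * c ^ 2) - c * x - (-(dir * (2 * π * I * c + x))) ^ 2 / (4 * -π) =
      -(I * x ^ 2 / (4 * π)) := by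
    rw [neg_sq, mul_pow, dir_sq]
    field_simp
    linear_combination (-4 * π * c * (π * c * I + x)) * I_sq
  rw [lineInt_eq, integral_mul_const]
  simp only [mordell_exponent_linePoint]
  rw [integral_cexp_quadratic (by simpa using Real.pi_pos), neg_neg, div_self hpi, one_cpow,
    one_mul, hexponent, ← dir, dir_eq, ← Complex.exp_add, sub_eq_add_neg]

lemma mordellKernel_add_one (x u : ℂ) :
    mordellKernel x (u + 1) = cexp (-x) * mordellKernel (x + 2 * π * I) u := by
  have hnum : cexp (-(π * I * (u + 1) ^ 2) - (u + 1) * x) =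
      -(cexp (-x) * cexp (-(π * I * u ^ 2) - u * (x + 2 * π * I))) := by
    rw [← Complex.exp_add, ← neg_one_mul (cexp _), ← exp_neg_pi_mul_I, ← Complex.exp_add]
    ring_nf
  rw [mordellKernel, mordellKernel, sinDenom_add_one, hnum, neg_div_neg_eq, mul_div_assoc]

lemma mordellKernel_sub {u : ℂ} (x : ℂ) (hu : sinDenom u ≠ 0) :
    mordellKernel x u - mordellKernel (x + 2 * π * I) u =
      cexp (-(π * I * u ^ 2) - u * (x + π * I)) := by
  rw [mordellKernel, mordellKernel, ← sub_div, div_eq_iff hu, sinDenom, mul_sub,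
    ← Complex.exp_add, ← Complex.exp_add]
  ring_nf

variable {c : ℝ}

lemma integrable_mordellKernel (hc : ∀ n : ℤ, c ≠ n) (x : ℂ) :
    Integrable fun t : ℝ ↦ mordellKernel x (linePoint c (-(π / 4)) t) := by
  have hθ := sin_neg_pi_div_four_ne_zero
  have hone : (fun t : ℝ ↦ (1 + t ^ 2)⁻¹) =O[cocompact ℝ] fun _ ↦ (1 : ℂ) :=
    .of_bound 1 (.of_forall fun t ↦ by
      rw [Real.norm_of_nonneg (by positivity), norm_one, one_mul]
      exact inv_le_one_of_one_le₀ (by nlinarith))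
  have hcont : Continuous fun t : ℝ ↦ mordellKernel x (linePoint c (-(π / 4)) t) :=
    Continuous.div₀ (by fun_prop) (by fun_prop) (sinDenom_linePoint_ne_zero hθ hc)
  refine hcont.locallyIntegrable.integrable_of_isBigO_cocompact ?_
    ((integrable_cexp_mordell_exponent c x).integrableAtFilter _)
  simpa only [mordellKernel, div_eq_mul_inv, mul_one] using
    (Asymptotics.isBigO_refl (fun t : ℝ ↦ cexp (-(π * I * linePoint c (-(π / 4)) t ^ 2) -
      linePoint c (-(π / 4)) t * x)) _).mul ((isBigO_inv_sinDenom_linePoint c hθ).trans hone)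

lemma mordellIntegral_add_one (c : ℝ) (x : ℂ) :
    mordellIntegral (c + 1) x = cexp (-x) * mordellIntegral c (x + 2 * π * I) := by
  simp only [mordellIntegral, lineInt_add, ofReal_one, mordellKernel_add_one, lineInt_const_mul]

lemma mordellIntegral_sub (hc : ∀ n : ℤ, c ≠ n) (x : ℂ) :
    mordellIntegral c x - mordellIntegral c (x + 2 * π * I) =
      cexp (-(I * x ^ 2 / (4 * π)) + x / 2) := by
  have hpi : (π : ℂ) ≠ 0 := ofReal_ne_zero.2 Real.pi_ne_zero
  rw [mordellIntegral, mordellIntegral,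
    ← lineInt_sub (integrable_mordellKernel hc _) (integrable_mordellKernel hc _),
    lineInt_congr (g := fun u ↦ cexp (-(π * I * u ^ 2) - u * (x + π * I))) fun t ↦
      mordellKernel_sub x (sinDenom_linePoint_ne_zero sin_neg_pi_div_four_ne_zero hc t),
    lineInt_cexp_mordell_exponent]
  congr 1
  field_simp
  linear_combination -2 * π * (2 * x + π * I) * I_sq

lemma exists_re_neg_pi_mul_sq_add_le (k d : ℂ) :
    ∃ M : ℝ, ∀ z : ℂ, |z.im| ≤ 1 → (-π * z ^ 2 + k * z + d).re ≤ M - |z.re| := by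
  refine ⟨π + ‖k‖ + ‖d‖ + (‖k‖ + 1) ^ 2, fun z hz ↦ ?_⟩
  have hsq : (-π * z ^ 2 : ℂ).re = -π * (|z.re| ^ 2 - |z.im| ^ 2) := by
    rw [sq_abs, sq_abs, ← ofReal_neg, re_ofReal_mul, sq, mul_re, sq, sq]
  have hlin : (k * z).re ≤ ‖k‖ * (|z.re| + 1) := by
    refine (re_le_norm _).trans ?_
    rw [norm_mul]
    gcongr
    exact (norm_le_abs_re_add_abs_im z).trans (by gcongr)
  have hconst : d.re ≤ ‖d‖ := re_le_norm d
  rw [add_re, add_re, hsq]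
  nlinarith [Real.pi_gt_three, sq_nonneg (|z.re| - (‖k‖ + 1) / 2), sq_nonneg |z.re|,
    pow_le_one₀ (n := 2) (abs_nonneg z.im) hz, sq_nonneg (‖k‖ + 1)]

lemma one_le_abs_im_linePoint (c : ℝ) {z : ℂ} (him : |z.im| ≤ 1) (hre : 3 ≤ |z.re|) :
    1 ≤ |(linePoint c (-(π / 4)) z).im| := by
  have hdiff : 2 ≤ |z.im - z.re| := by
    rw [abs_sub_comm]
    linarith [abs_sub_abs_le_abs_sub z.re z.im]
  have hsqrt : 1 ≤ √2 := Real.one_le_sqrt.2 one_le_two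
  rw [linePoint_im, sin_neg_pi_div_four, Real.cos_neg, Real.cos_pi_div_four, neg_mul,
    ← sub_eq_add_neg, ← mul_sub, abs_mul, abs_of_nonneg (by positivity)]
  nlinarith

lemma exists_norm_mordellKernel_linePoint_le (c : ℝ) (x : ℂ) :
    ∃ M : ℝ, ∀ z : ℂ, |z.im| ≤ 1 → 3 ≤ |z.re| →
      ‖mordellKernel x (linePoint c (-(π / 4)) z)‖ ≤ Real.exp (M - |z.re|) := by
  obtain ⟨M, hM⟩ := exists_re_neg_pi_mul_sq_add_le (-(dir * (2 * π * I * c + x)))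
    (-(π * I * c ^ 2) - c * x)
  refine ⟨M, fun z him hre ↦ ?_⟩
  rw [mordellKernel, norm_div, Complex.norm_exp, mordell_exponent_linePoint]
  exact (div_le_self (Real.exp_pos _).le
    (one_le_norm_sinDenom (one_le_abs_im_linePoint c him hre))).trans
    (Real.exp_le_exp.2 (hM z him))

/-- The combination `mordellKernel x u - e^{-x} * mordellKernel 0 u` with its singularity at `u = 1`
removed: both factors vanishing there are replaced by their divided differences. -/
noncomputable def mordellRegularKernel (x u : ℂ) : ℂ :=
  cexp (-(π * I * u ^ 2)) *
    (dslope (fun v ↦ cexp (-(v * x)) - cexp (-x)) 1 u / dslope sinDenom 1 u)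

lemma mordellRegularKernel_eq (x : ℂ) {u : ℂ} (hu : sinDenom u ≠ 0) :
    mordellRegularKernel x u = mordellKernel x u - cexp (-x) * mordellKernel 0 u := by
  have hone : u ≠ 1 := fun h ↦ hu (h ▸ sinDenom_one)
  have hsub : u - 1 ≠ 0 := sub_ne_zero.2 hone
  rw [mordellRegularKernel, dslope_of_ne _ hone, dslope_of_ne _ hone, slope_def_field,
    slope_def_field, sinDenom_one, mordellKernel, mordellKernel, one_mul, sub_self, sub_zero,
    sub_zero, mul_zero, sub_zero, sub_eq_add_neg _ (u * x), Complex.exp_add]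
  field_simp

lemma differentiableAt_mordellRegularKernel (x : ℂ) {u : ℂ} (hu : u = 1 ∨ sinDenom u ≠ 0) :
    DifferentiableAt ℂ (mordellRegularKernel x) u := by
  have hdslope {f : ℂ → ℂ} (hf : Differentiable ℂ f) : DifferentiableAt ℂ (dslope f 1) u :=
    ((Complex.differentiableOn_dslope univ_mem).2 hf.differentiableOn).differentiableAt univ_mem
  have hne : dslope sinDenom 1 u ≠ 0 := by
    rcases eq_or_ne u 1 with rfl | hone
    · rw [dslope_same]
      exact deriv_sinDenom_one_ne_zero
    · rw [dslope_of_ne _ hone, slope_def_field, sinDenom_one, sub_zero]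
      exact div_ne_zero (hu.resolve_left hone) (sub_ne_zero.2 hone)
  exact DifferentiableAt.mul (by fun_prop)
    ((hdslope (by fun_prop)).fun_div (hdslope differentiable_sinDenom) hne)

/-- Between the parallel lines through `c` and `c + 1` the only integer is `1`. -/
lemma linePoint_eq_one_or_sinDenom_ne_zero (hc₀ : 0 < c) (hc₁ : c < 1) {z : ℂ}
    (hz : z.im ∈ Icc 0 (√2 / 2)) :
    linePoint c (-(π / 4)) z = 1 ∨ sinDenom (linePoint c (-(π / 4)) z) ≠ 0 := by
  refine or_iff_not_imp_right.2 fun hzero ↦ ?_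
  obtain ⟨n, hn⟩ := sinDenom_eq_zero_iff.1 (not_not.1 hzero)
  have hsqrt : 0 < √2 := by positivity
  have hsqrt_sq : √2 * √2 = 2 := Real.mul_self_sqrt zero_le_two
  have him := congrArg im hn
  have hre := congrArg re hn
  simp only [linePoint_im, linePoint_re, sin_neg_pi_div_four, Real.cos_neg, Real.cos_pi_div_four,
    intCast_im, intCast_re] at him hre
  have hdiag : z.re = z.im := by nlinarith
  have hn₀ : (0 : ℝ) < n := by nlinarith [hz.1]
  have hn₂ : (n : ℝ) < 2 := by nlinarith [hz.2]
  obtain rfl : n = 1 := by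
    have : 0 < n := by exact_mod_cast hn₀
    have : n < 2 := by exact_mod_cast hn₂
    omega
  simpa using hn

lemma integrable_mordellRegularKernel (hc : ∀ n : ℤ, c ≠ n) (x : ℂ) :
    Integrable fun t : ℝ ↦ mordellRegularKernel x (linePoint c (-(π / 4)) t) := by
  simp only [mordellRegularKernel_eq x
    (sinDenom_linePoint_ne_zero sin_neg_pi_div_four_ne_zero hc _)]
  exact (integrable_mordellKernel hc x).sub ((integrable_mordellKernel hc 0).const_mul _)

lemma lineInt_mordellRegularKernel (hc : ∀ n : ℤ, c ≠ n) (x : ℂ) :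
    lineInt c (-(π / 4)) (mordellRegularKernel x) =
      mordellIntegral c x - cexp (-x) * mordellIntegral c 0 := by
  rw [mordellIntegral, mordellIntegral, ← lineInt_const_mul,
    ← lineInt_sub (integrable_mordellKernel hc x) ((integrable_mordellKernel hc 0).const_mul _)]
  exact lineInt_congr fun t ↦ mordellRegularKernel_eq x
    (sinDenom_linePoint_ne_zero sin_neg_pi_div_four_ne_zero hc t)

lemma exists_norm_mordellRegularKernel_linePoint_le (c : ℝ) (x : ℂ) :
    ∃ K : ℝ, ∀ z : ℂ, |z.im| ≤ 1 → 3 ≤ |z.re| →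
      ‖mordellRegularKernel x (linePoint c (-(π / 4)) z)‖ ≤ K * Real.exp (-|z.re|) := by
  obtain ⟨M, hM⟩ := exists_norm_mordellKernel_linePoint_le c x
  obtain ⟨N, hN⟩ := exists_norm_mordellKernel_linePoint_le c 0
  refine ⟨Real.exp M + ‖cexp (-x)‖ * Real.exp N, fun z him hre ↦ ?_⟩
  have hne : sinDenom (linePoint c (-(π / 4)) z) ≠ 0 := norm_pos_iff.1
    (one_pos.trans_le (one_le_norm_sinDenom (one_le_abs_im_linePoint c him hre)))
  rw [mordellRegularKernel_eq x hne, add_mul, mul_assoc, ← Real.exp_add, ← Real.exp_add,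
    ← sub_eq_add_neg, ← sub_eq_add_neg]
  refine (norm_sub_le _ _).trans ?_
  rw [norm_mul]
  gcongr
  exacts [hM z him hre, hN z him hre]

lemma lineInt_add_one_mordellRegularKernel (hc₀ : 0 < c) (hc₁ : c < 1) (x : ℂ) :
    lineInt (c + 1) (-(π / 4)) (mordellRegularKernel x) =
      lineInt c (-(π / 4)) (mordellRegularKernel x) := by
  have hstrip : uIcc 0 (-(1 * Real.sin (-(π / 4)))) = Icc 0 (√2 / 2) := by
    rw [sin_neg_pi_div_four, one_mul, neg_neg, uIcc_of_le (by positivity)]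
  have hc := ne_intCast_of_pos_of_lt_one hc₀ hc₁
  obtain ⟨K, hK⟩ := exists_norm_mordellRegularKernel_linePoint_le c x
  refine lineInt_add_eq_of_differentiableAt (φ := fun T ↦ K * Real.exp (-T))
    (fun z hz ↦ differentiableAt_mordellRegularKernel x
      (linePoint_eq_one_or_sinDenom_ne_zero hc₀ hc₁ (hstrip ▸ hz)))
    (integrable_mordellRegularKernel hc x)
    (integrable_mordellRegularKernel (add_one_ne_intCast hc) x)
    (by simpa using Real.tendsto_exp_neg_atTop_nhds_zero.const_mul K) ?_
  filter_upwards [eventually_ge_atTop 3] with T hT z hre him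
  rw [hstrip] at him
  have hsqrt : √2 ≤ 2 := Real.sqrt_le_left (by norm_num) |>.2 (by norm_num)
  rw [← hre]
  exact hK z (abs_le.2 ⟨by linarith [him.1], by linarith [him.2]⟩) (hre ▸ hT)

/-- The functional equations of `mordellIntegral_add_one` and `mordellIntegral_sub` eliminate the
values at `x + 2πi` from the invariance under the shift of the contour across the pole `u = 1`. -/
lemma exp_sub_one_mul_mordellIntegral (hc₀ : 0 < c) (hc₁ : c < 1) (x : ℂ) :
    (cexp x - 1) * mordellIntegral c x = 1 - cexp (-(I * x ^ 2 / (4 * π)) + x / 2) := by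
  have hc := ne_intCast_of_pos_of_lt_one hc₀ hc₁
  have hshift := lineInt_add_one_mordellRegularKernel hc₀ hc₁ x
  rw [lineInt_mordellRegularKernel hc, lineInt_mordellRegularKernel (add_one_ne_intCast hc),
    mordellIntegral_add_one, mordellIntegral_add_one, neg_zero, Complex.exp_zero, one_mul] at hshift
  have hsub := mordellIntegral_sub hc x
  have hsub_zero : mordellIntegral c 0 - mordellIntegral c (0 + 2 * π * I) = 1 := by
    simpa using mordellIntegral_sub hc 0
  have hexp : cexp x * cexp (-x) = 1 := by rw [← Complex.exp_add, add_neg_cancel, exp_zero]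
  linear_combination -cexp x * hshift - hsub + hsub_zero +
    (mordellIntegral c (x + 2 * π * I) + mordellIntegral c 0 -
      mordellIntegral c (0 + 2 * π * I)) * hexp

end MordellIntegral

section DualIntegral

/-- The integrand of `dualIntegral`. -/
noncomputable def dualKernel (x u : ℂ) : ℂ :=
  cexp (π * I * u ^ 2 - u * x) / (cexp (2 * π * I * u) + 1)

/-- The integral `∫ e^{iπu² - xu} / (e^{2πiu} + 1) du` along the line of slope `1` through `c`,
traversed from the upper right to the lower left. -/
noncomputable def dualIntegral (c : ℝ) (x : ℂ) : ℂ := lineInt c (-(3 * π / 4)) (dualKernel x)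

lemma dualKernel_eq (x u : ℂ) :
    dualKernel x u =
      -(cexp (π * I * u ^ 2 - π * I * (u + 1 / 2) - u * x) / sinDenom (u + 1 / 2)) := by
  have hden : cexp (2 * π * I * u) + 1 =
      -(cexp (π * I * (u + 1 / 2)) * sinDenom (u + 1 / 2)) := by
    rw [exp_mul_sinDenom, show 2 * π * I * (u + 1 / 2) = 2 * π * I * u + π * I by ring,
      Complex.exp_add, exp_pi_mul_I]
    ring
  have hnum : cexp (π * I * u ^ 2 - u * x) =
      cexp (π * I * (u + 1 / 2)) * cexp (π * I * u ^ 2 - π * I * (u + 1 / 2) - u * x) := by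
    rw [← Complex.exp_add]
    ring_nf
  rw [dualKernel, hden, hnum, div_neg, mul_div_mul_left _ _ (exp_ne_zero _)]

lemma dualKernel_half_sub_conj (x v : ℂ) :
    dualKernel x (1 / 2 - conj v) =
      -(cexp (π * I / 4 - x / 2) * conj (mordellKernel (-conj x) v)) := by
  have hden : sinDenom (1 / 2 - conj v + 1 / 2) = -conj (sinDenom v) := by
    rw [show 1 / 2 - conj v + 1 / 2 = -conj v + 1 by ring, sinDenom_add_one, sinDenom_neg, neg_neg,
      sinDenom_conj]
  have hnum : -cexp (π * I * (1 / 2 - conj v) ^ 2 - π * I * (1 / 2 - conj v + 1 / 2) -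
      (1 / 2 - conj v) * x) =
      cexp (π * I / 4 - x / 2) * cexp (π * I * conj v ^ 2 + conj v * x) := by
    rw [← neg_one_mul, ← exp_pi_mul_I, ← Complex.exp_add, ← Complex.exp_add]
    ring_nf
  have hconj : conj (mordellKernel (-conj x) v) =
      cexp (π * I * conj v ^ 2 + conj v * x) / conj (sinDenom v) := by
    rw [mordellKernel, map_div₀, ← exp_conj]
    simp
  rw [dualKernel_eq, hden, ← neg_div, hnum, hconj, div_neg, mul_div_assoc]

lemma dualIntegral_eq (c : ℝ) (x : ℂ) :
    dualIntegral c x = cexp (π * I / 4 - x / 2) * conj (mordellIntegral (1 / 2 - c) (-conj x)) := by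
  have hreflect := lineInt_sub_conj (1 / 2) (1 / 2 - c) (-(π / 4)) (dualKernel x)
  rw [sub_sub_cancel, show -π - -(π / 4) = -(3 * π / 4) by ring] at hreflect
  push_cast at hreflect
  simp only [dualKernel_half_sub_conj, map_neg, map_mul, conj_conj, ← neg_mul,
    lineInt_const_mul] at hreflect
  rw [dualIntegral, hreflect, mordellIntegral]
  simp

lemma mordellIntegral_eq_dualIntegral {c c' : ℝ} (hc₀ : 0 < c) (hc₁ : c < 1)
    (hc'₀ : -(1 / 2) < c') (hc'₁ : c' < 1 / 2) {x : ℂ} (hx : cexp x ≠ 1) :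
    mordellIntegral c x = dir * cexp (-(I * x ^ 2 / (4 * π))) * dualIntegral c' x := by
  have hclosed := exp_sub_one_mul_mordellIntegral hc₀ hc₁ x
  have hclosed_conj := congrArg conj
    (exp_sub_one_mul_mordellIntegral (c := 1 / 2 - c') (by linarith) (by linarith) (-conj x))
  have hexponent : conj (-(I * (-conj x) ^ 2 / (4 * π)) + -conj x / 2) =
      I * x ^ 2 / (4 * π) + -(x / 2) := by
    simp only [map_add, map_neg, map_div₀, map_mul, map_pow, map_ofNat, conj_I, conj_conj,
      conj_ofReal]
    ring
  simp only [map_mul, map_sub, map_one, ← exp_conj, hexponent] at hclosed_conj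
  rw [map_neg, conj_conj, Complex.exp_add] at hclosed_conj
  rw [Complex.exp_add] at hclosed
  have hexp : cexp x * cexp (-x) = 1 := by rw [← Complex.exp_add, add_neg_cancel, exp_zero]
  have hexp_half : cexp (x / 2) * cexp (-(x / 2)) = 1 := by
    rw [← Complex.exp_add, add_neg_cancel, exp_zero]
  have hexp_mul : cexp x * cexp (-(x / 2)) = cexp (x / 2) := by
    rw [← Complex.exp_add]
    ring_nf
  have hgauss : cexp (-(I * x ^ 2 / (4 * π))) * cexp (I * x ^ 2 / (4 * π)) = 1 := by
    rw [← Complex.exp_add, neg_add_cancel, exp_zero]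
  rw [dualIntegral_eq, sub_eq_add_neg _ (x / 2), Complex.exp_add]
  refine mul_left_cancel₀ (sub_ne_zero.2 hx) ?_
  generalize conj (mordellIntegral (1 / 2 - c') (-conj x)) = Φ at *
  generalize cexp (-(I * x ^ 2 / (4 * π))) = G at *
  generalize cexp (I * x ^ 2 / (4 * π)) = G' at *
  generalize cexp (-(x / 2)) = Y at *
  linear_combination hclosed - (cexp x - 1) * G * Y * Φ * dir_mul_exp
    + G * Y * cexp x * hclosed_conj - G * Y * Φ * hexp + (G - G * G' * Y) * hexp_mul
    - G * G' * hexp_half - hgauss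

end DualIntegral

section ParabolicCylinder

/-- The Laplace variable `√(2π) e^{-iπ/4} w`, for which `e^{-u * laplaceVar w}` is the exponential
in the integral representation of `U(1/2 - s, √(2π) e^{-iπ/4} u)`. -/
noncomputable def laplaceVar (w : ℝ) : ℂ := √(2 * π) * dir * w

@[fun_prop]
lemma continuous_laplaceVar : Continuous laplaceVar := by unfold laplaceVar; fun_prop

lemma laplaceVar_eq (w : ℝ) : laplaceVar w = (√π * w : ℝ) * (1 - I) := by
  have hsqrt : (√2 : ℂ) * √2 = 2 := by exact_mod_cast Real.mul_self_sqrt zero_le_two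
  rw [laplaceVar, dir_eq_sqrt, Real.sqrt_mul zero_le_two]
  push_cast
  linear_combination √π * w / 2 * (1 - I) * hsqrt

lemma re_mul_laplaceVar (u : ℂ) (w : ℝ) : (u * laplaceVar w).re = √π * w * (u.re + u.im) := by
  rw [laplaceVar_eq, mul_left_comm, re_ofReal_mul, mul_re, sub_re, sub_im, one_re, one_im, I_re,
    I_im]
  ring

lemma I_mul_laplaceVar_sq (w : ℝ) : I * laplaceVar w ^ 2 / (4 * π) = (w : ℂ) ^ 2 / 2 := by
  have hpi : (π : ℂ) ≠ 0 := ofReal_ne_zero.2 Real.pi_ne_zero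
  have hsqrt : (√(2 * π) : ℂ) ^ 2 = 2 * π := by
    exact_mod_cast Real.sq_sqrt (by positivity : 0 ≤ 2 * π)
  rw [laplaceVar, mul_pow, mul_pow, hsqrt, dir_sq]
  field_simp
  linear_combination -4 * (w : ℂ) ^ 2 * I_sq

lemma cexp_laplaceVar_ne_one {w : ℝ} (hw : 0 < w) : cexp (laplaceVar w) ≠ 1 := by
  intro h
  have hre : (laplaceVar w).re = √π * w := by simpa using re_mul_laplaceVar 1 w
  have hnorm : Real.exp (√π * w) = 1 := by rw [← hre, ← Complex.norm_exp, h, norm_one]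
  exact (Real.one_lt_exp_iff.2 (by positivity : 0 < √π * w)).ne' hnorm

variable {a s u : ℂ} {c c' : ℝ}

lemma norm_mordellKernel_laplaceVar (c t w : ℝ) :
    ‖mordellKernel (laplaceVar w) (linePoint c (-(π / 4)) t)‖ =
      ‖mordellKernel 0 (linePoint c (-(π / 4)) t)‖ * Real.exp (-(√π * c * w)) := by
  have hre : (linePoint c (-(π / 4)) t).re + (linePoint c (-(π / 4)) t).im = c := by
    rw [linePoint_re, linePoint_im, sin_neg_pi_div_four, Real.cos_neg, Real.cos_pi_div_four,
      ofReal_re, ofReal_im]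
    ring
  rw [mordellKernel, mordellKernel, mul_zero, sub_zero, sub_eq_add_neg, Complex.exp_add,
    mul_div_right_comm, norm_mul, Complex.norm_exp (-(_ * _)), neg_re, re_mul_laplaceVar, hre,
    mul_right_comm √π]

lemma lineInt_integral_mordellKernel (ha : -1 < a.re) (hc₀ : 0 < c) (hc₁ : c < 1) :
    lineInt c (-(π / 4)) (fun u ↦
        ∫ w : ℝ in Ioi 0, (w : ℂ) ^ a * mordellKernel (laplaceVar w) u) =
      ∫ w : ℝ in Ioi 0, (w : ℂ) ^ a * mordellIntegral c (laplaceVar w) := by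
  have hc := ne_intCast_of_pos_of_lt_one hc₀ hc₁
  refine lineInt_setIntegral_Ioi_swap ha ?_ (integrable_mordellKernel hc 0).norm
    (mul_pos (Real.sqrt_pos.2 Real.pi_pos) hc₀)
    fun t w _ ↦ (norm_mordellKernel_laplaceVar c t w).le
  exact Continuous.div₀ (by fun_prop) (by fun_prop)
    fun p ↦ sinDenom_linePoint_ne_zero sin_neg_pi_div_four_ne_zero hc p.1

lemma cos_neg_three_pi_div_four : Real.cos (-(3 * π / 4)) = -(√2 / 2) := by
  rw [Real.cos_neg, show 3 * π / 4 = π - π / 4 by ring, Real.cos_pi_sub, Real.cos_pi_div_four]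

lemma sin_neg_three_pi_div_four : Real.sin (-(3 * π / 4)) = -(√2 / 2) := by
  rw [Real.sin_neg, show 3 * π / 4 = π - π / 4 by ring, Real.sin_pi_sub, Real.sin_pi_div_four]

lemma sin_neg_three_pi_div_four_ne_zero : Real.sin (-(3 * π / 4)) ≠ 0 := by
  rw [sin_neg_three_pi_div_four]
  exact neg_ne_zero.2 (by positivity)

lemma re_dual_exponent_le (c t w : ℝ) :
    (-((w : ℂ) ^ 2 / 2) + (π * I * linePoint c (-(3 * π / 4)) t ^ 2 -
      π * I * (linePoint c (-(3 * π / 4)) t + 1 / 2) -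
      linePoint c (-(3 * π / 4)) t * laplaceVar w)).re ≤
      π * (2 * c - 1) ^ 2 / 8 - √π / 2 * w := by
  have hre : (linePoint c (-(3 * π / 4)) t).re = c - √2 / 2 * t := by
    rw [linePoint_re, cos_neg_three_pi_div_four, ofReal_re, ofReal_im]
    ring
  have him : (linePoint c (-(3 * π / 4)) t).im = -(√2 / 2 * t) := by
    rw [linePoint_im, sin_neg_three_pi_div_four, ofReal_re, ofReal_im]
    ring
  generalize linePoint c (-(3 * π / 4)) t = u at *
  have hquad : (-((w : ℂ) ^ 2 / 2) + (π * I * u ^ 2 - π * I * (u + 1 / 2))).re =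
      -(w ^ 2 / 2) - 2 * π * u.re * u.im + π * u.im := by
    rw [show -((w : ℂ) ^ 2 / 2) + (π * I * u ^ 2 - π * I * (u + 1 / 2)) =
      (-(w ^ 2 / 2) : ℝ) + π * (I * (u * u - u - 1 / 2)) by push_cast; ring,
      add_re, re_ofReal_mul, ofReal_re, I_mul_re, sub_im, sub_im, mul_im]
    simp only [one_div, inv_im, im_ofNat, neg_zero, zero_div, sub_zero]
    ring
  have hsqrt : √2 ^ 2 = 2 := Real.sq_sqrt zero_le_two
  have hpi : √π ^ 2 = π := Real.sq_sqrt Real.pi_pos.le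
  rw [← add_sub_assoc, sub_re, re_mul_laplaceVar, hquad, hre, him, ← sub_nonneg]
  refine (sq_nonneg (√π * t - √2 / 2 * w - (2 * c - 1) * √π * √2 / 4)).trans_eq ?_
  linear_combination (t ^ 2 + (2 * c - 1) ^ 2 * √2 ^ 2 / 16 - (2 * c - 1) * √2 * t / 2) * hpi +
    (-π * t ^ 2 / 2 + w ^ 2 / 4 + (2 * c - 1) ^ 2 * π / 16 + (2 * c - 1) * √π * w / 4) * hsqrt

lemma norm_cexp_mul_dualKernel_laplaceVar_le (c t w : ℝ) :
    ‖cexp (-((w : ℂ) ^ 2 / 2)) * dualKernel (laplaceVar w) (linePoint c (-(3 * π / 4)) t)‖ ≤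
      Real.exp (π * (2 * c - 1) ^ 2 / 8) *
        ‖(sinDenom (linePoint (c + 1 / 2 : ℝ) (-(3 * π / 4)) t))⁻¹‖ *
        Real.exp (-(√π / 2 * w)) := by
  have hshift : linePoint c (-(3 * π / 4)) t + 1 / 2 =
      linePoint (c + 1 / 2 : ℝ) (-(3 * π / 4)) t := by
    rw [linePoint_add]
    push_cast
    rfl
  rw [dualKernel_eq, mul_neg, norm_neg, ← mul_div_assoc, ← Complex.exp_add, div_eq_mul_inv,
    norm_mul, Complex.norm_exp, mul_right_comm (Real.exp _), ← Real.exp_add, ← sub_eq_add_neg,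
    ← hshift]
  gcongr
  exact re_dual_exponent_le c t w

lemma continuous_cexp_mul_dualKernel_laplaceVar (hc : ∀ n : ℤ, c + 1 / 2 ≠ n) :
    Continuous fun p : ℝ × ℝ ↦ cexp (-((p.2 : ℂ) ^ 2 / 2)) *
      dualKernel (laplaceVar p.2) (linePoint c (-(3 * π / 4)) p.1) := by
  have hne (p : ℝ × ℝ) : sinDenom (linePoint c (-(3 * π / 4)) p.1 + 1 / 2) ≠ 0 := by
    simpa [linePoint_add] using
      sinDenom_linePoint_ne_zero sin_neg_three_pi_div_four_ne_zero hc p.1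
  simp only [dualKernel_eq]
  exact Continuous.mul (by fun_prop) (Continuous.div₀ (by fun_prop) (by fun_prop) hne).fun_neg

lemma lineInt_integral_dualKernel (ha : -1 < a.re) (hc₀ : -(1 / 2) < c) (hc₁ : c < 1 / 2) :
    lineInt c (-(3 * π / 4)) (fun u ↦
        ∫ w : ℝ in Ioi 0, (w : ℂ) ^ a * (cexp (-((w : ℂ) ^ 2 / 2)) * dualKernel (laplaceVar w) u)) =
      ∫ w : ℝ in Ioi 0,
        (w : ℂ) ^ a * (cexp (-((w : ℂ) ^ 2 / 2)) * dualIntegral c (laplaceVar w)) := by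
  have hc := ne_intCast_of_pos_of_lt_one (c := c + 1 / 2) (by linarith) (by linarith)
  have hθ := sin_neg_three_pi_div_four_ne_zero
  simp only [dualIntegral, ← lineInt_const_mul _ _ (cexp _)]
  exact lineInt_setIntegral_Ioi_swap
    (K := fun w u ↦ cexp (-((w : ℂ) ^ 2 / 2)) * dualKernel (laplaceVar w) u) ha
    (continuous_cexp_mul_dualKernel_laplaceVar hc)
    ((integrable_inv_sinDenom_linePoint hθ hc).norm.const_mul _)
    (half_pos (Real.sqrt_pos.2 Real.pi_pos))
    fun t w _ ↦ norm_cexp_mul_dualKernel_laplaceVar_le c t w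

lemma lineInt_integral_mordellKernel_eq_dual (ha : -1 < a.re) (hc₀ : 0 < c) (hc₁ : c < 1)
    (hc'₀ : -(1 / 2) < c') (hc'₁ : c' < 1 / 2) :
    lineInt c (-(π / 4)) (fun u ↦
        ∫ w : ℝ in Ioi 0, (w : ℂ) ^ a * mordellKernel (laplaceVar w) u) =
      dir * lineInt c' (-(3 * π / 4)) fun u ↦
        ∫ w : ℝ in Ioi 0,
          (w : ℂ) ^ a * (cexp (-((w : ℂ) ^ 2 / 2)) * dualKernel (laplaceVar w) u) := by
  rw [lineInt_integral_mordellKernel ha hc₀ hc₁, lineInt_integral_dualKernel ha hc'₀ hc'₁,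
    ← integral_const_mul]
  refine setIntegral_congr_fun measurableSet_Ioi fun w hw ↦ ?_
  rw [mordellIntegral_eq_dualIntegral hc₀ hc₁ hc'₀ hc'₁ (cexp_laplaceVar_ne_one hw),
    I_mul_laplaceVar_sq, mul_assoc dir, mul_left_comm]

lemma dir_mul_linePoint_re_pos (hc : 0 < c) (t : ℝ) :
    0 < (dir * linePoint c (-(π / 4)) t).re := by
  rw [linePoint_neg_pi_div_four, mul_add, ← mul_assoc, ← sq, dir_sq]
  simp [dir_re, hc]

/-- The rotation by `e^{-iπ/4}` does not cross the branch cut of the logarithm. -/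
lemma log_eq_log_dir_mul_add (hu : 0 < (dir * u).re) : log u = log (dir * u) + π * I / 4 := by
  have hne : dir * u ≠ 0 := ne_of_apply_ne re hu.ne'
  have harg := abs_lt.1 (abs_arg_lt_pi_div_two_iff.2 (Or.inl hu))
  have hexp : u = cexp (log (dir * u) + π * I / 4) := by
    rw [Complex.exp_add, exp_log hne, mul_right_comm, dir_mul_exp, one_mul]
  have him : (log (dir * u) + π * I / 4).im = (dir * u).arg + π / 4 := by
    simp [log_im]
  conv_lhs => rw [hexp]
  exact log_exp (by rw [him]; linarith [Real.pi_pos]) (by rw [him]; linarith [Real.pi_pos])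

lemma cpow_sub_one_eq_integral_laplaceVar (hs : s.re < 1) (hu : 0 < (dir * u).re) :
    u ^ (s - 1) = (2 * π : ℂ) ^ ((1 - s) / 2) * cexp (-(π * I * (1 - s) / 4)) *
      (Gamma (1 - s))⁻¹ * ∫ w : ℝ in Ioi 0, (w : ℂ) ^ (-s) * cexp (-(u * laplaceVar w)) := by
  have hv : dir * u ≠ 0 := ne_of_apply_ne re hu.ne'
  have hu₀ : u ≠ 0 := right_ne_zero_of_mul hv
  have hsqrt : 0 < √(2 * π) := by positivity
  have hr : 0 < (√(2 * π) * (dir * u)).re := by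
    rw [re_ofReal_mul]
    positivity
  have hs' : 0 < (1 - s).re := by simpa using hs
  have hGamma : Gamma (1 - s) ≠ 0 := Gamma_ne_zero_of_re_pos hs'
  have hlog : log (2 * π : ℂ) = Real.log (2 * π) := by
    rw [ofReal_log (by positivity)]
    push_cast
    rfl
  have hlaplace : ∫ w : ℝ in Ioi 0, (w : ℂ) ^ (-s) * cexp (-(u * laplaceVar w)) =
      (√(2 * π) * (dir * u)) ^ (-(1 - s)) * Gamma (1 - s) := by
    rw [← integral_cpow_mul_exp_neg_mul_Ioi_of_re_pos hs' hr, sub_sub_cancel_left]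
    simp only [laplaceVar]
    ring_nf
  rw [hlaplace, mul_assoc, mul_comm (_ ^ _) (Gamma _), inv_mul_cancel_left₀ hGamma,
    cpow_def_of_ne_zero hu₀, cpow_def_of_ne_zero (ne_of_apply_ne re hr.ne'),
    cpow_def_of_ne_zero (by simp [Real.pi_ne_zero]), hlog, log_ofReal_mul hsqrt hv,
    Real.log_sqrt (by positivity), log_eq_log_dir_mul_add hu, ← Complex.exp_add,
    ← Complex.exp_add]
  push_cast
  ring_nf

lemma cexp_mul_cpow_div_sinDenom_eq_integral (hs : s.re < 1) (hu : 0 < (dir * u).re) :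
    cexp (-(π * I * u ^ 2)) * u ^ (s - 1) / sinDenom u =
      (2 * π : ℂ) ^ ((1 - s) / 2) * cexp (-(π * I * (1 - s) / 4)) * (Gamma (1 - s))⁻¹ *
        ∫ w : ℝ in Ioi 0, (w : ℂ) ^ (-s) * mordellKernel (laplaceVar w) u := by
  have hkernel (w : ℝ) : (w : ℂ) ^ (-s) * mordellKernel (laplaceVar w) u =
      cexp (-(π * I * u ^ 2)) / sinDenom u * ((w : ℂ) ^ (-s) * cexp (-(u * laplaceVar w))) := by
    rw [mordellKernel, sub_eq_add_neg, Complex.exp_add]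
    ring
  simp only [hkernel, integral_const_mul]
  rw [cpow_sub_one_eq_integral_laplaceVar hs hu]
  ring

lemma lineInt_cexp_mul_cpow_div_sinDenom (hs : s.re < 1) (hc : 0 < c) :
    lineInt c (-(π / 4)) (fun u ↦ cexp (-(π * I * u ^ 2)) * u ^ (s - 1) / sinDenom u) =
      (2 * π : ℂ) ^ ((1 - s) / 2) * cexp (-(π * I * (1 - s) / 4)) * (Gamma (1 - s))⁻¹ *
        lineInt c (-(π / 4)) fun u ↦
          ∫ w : ℝ in Ioi 0, (w : ℂ) ^ (-s) * mordellKernel (laplaceVar w) u := by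
  rw [← lineInt_const_mul]
  exact lineInt_congr fun t ↦
    cexp_mul_cpow_div_sinDenom_eq_integral hs (dir_mul_linePoint_re_pos hc t)

lemma cexp_div_mul_integral_eq_integral_dualKernel (s u : ℂ) :
    cexp (π * I * u ^ 2) / (cexp (2 * π * I * u) + 1) *
        ∫ w in Ioi (0 : ℝ), cexp (-((w : ℂ) ^ 2 / 2) -
          (√(2 * π) : ℂ) * cexp (-(π * I / 4)) * u * (w : ℂ)) * (w : ℂ) ^ (-s) =
      ∫ w : ℝ in Ioi 0,
        (w : ℂ) ^ (-s) * (cexp (-((w : ℂ) ^ 2 / 2)) * dualKernel (laplaceVar w) u) := by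
  rw [← integral_const_mul]
  congr 1 with w
  have hvar : √(2 * π) * cexp (-(π * I / 4)) * u * w = u * laplaceVar w := by
    rw [laplaceVar, dir_eq]
    ring
  rw [hvar, dualKernel, sub_eq_add_neg, sub_eq_add_neg, Complex.exp_add, Complex.exp_add]
  ring

end ParabolicCylinder

end RiemannSiegel

open RiemannSiegel

/-- Conjugate form: representation of `∫_{0↘1} e^{-iπu²} u^{s-1}/(e^{iπu} - e^{-iπu}) du`
by an integral over the line `-1/2 ↙ 1/2` whose kernel is the real integral
representation of `U(1/2 - s, √(2π) e^{-iπ/4} u)`. -/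
theorem riemann_siegel_parabolic_cylinder_conj (s : ℂ) (hs : s.re < 1)
    (c c' : ℝ) (hc : 0 < c) (hc' : c < 1) (hc₁ : -(1/2) < c') (hc₂ : c' < 1/2) :
    lineInt c (-(π/4)) (fun u =>
      Complex.exp (-((π : ℂ) * Complex.I * u ^ 2)) * u ^ (s - 1) /
        (Complex.exp ((π : ℂ) * Complex.I * u) - Complex.exp (-((π : ℂ) * Complex.I * u)))) =
    (2 * (π : ℂ)) ^ ((1 - s) / 2) * Complex.exp (-((π : ℂ) * Complex.I * (2 - s) / 4)) *
      (Complex.Gamma (1 - s))⁻¹ *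
      lineInt c' (-(3 * π / 4)) (fun u =>
        Complex.exp ((π : ℂ) * Complex.I * u ^ 2) /
          (Complex.exp (2 * (π : ℂ) * Complex.I * u) + 1) *
        ∫ w in Set.Ioi (0 : ℝ),
          Complex.exp (-((w : ℂ) ^ 2 / 2) -
              (Real.sqrt (2 * π) : ℂ) * Complex.exp (-((π : ℂ) * Complex.I / 4)) * u * (w : ℂ)) *
            (w : ℂ) ^ (-s)) := by
  have hdir : cexp (-(π * I * (2 - s) / 4)) = cexp (-(π * I * (1 - s) / 4)) * dir := by
    rw [dir_eq, ← Complex.exp_add]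
    ring_nf
  have hs' : -1 < (-s).re := by simpa using hs
  refine (lineInt_cexp_mul_cpow_div_sinDenom hs hc).trans ?_
  simp only [cexp_div_mul_integral_eq_integral_dualKernel]
  rw [lineInt_integral_mordellKernel_eq_dual hs' hc hc' hc₁ hc₂, hdir]
  ring
end
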